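/- arXiv:2203.04620 — 2 statements merged into one kernel-verified Lean document; each statement's English description precedes it below -/
import Mathlib

section
/- Let P be an IDP Gorenstein polytope of dimension d and degree s. If d > 2s, then P is reducible. -/
open Pointwise

/-- A point of `ℝ^d` is a lattice point if all its coordinates are integers. -/
def IsLatticePt {d : ℕ} (x : Fin d → ℝ) : Prop := ∀ i, ∃ z : ℤ, x i = (z : ℝ)

/-- A lattice polytope is the (non-empty) convex hull of finitely many lattice points. -/
def IsLatticePolytope {d : ℕ} (P : Set (Fin d → ℝ)) : Prop :=
  ∃ V : Finset (Fin d → ℝ), V.Nonempty ∧ (∀ v ∈ V, IsLatticePt v) ∧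
    P = convexHull ℝ (V : Set (Fin d → ℝ))

/-- The dimension of a polytope: the dimension of the direction of its affine hull. -/
noncomputable def polyDim {d : ℕ} (P : Set (Fin d → ℝ)) : ℕ :=
  Module.finrank ℝ (affineSpan ℝ P).direction

/-- A polytope is hollow if its relative interior contains no lattice point. -/
def IsHollow {d : ℕ} (P : Set (Fin d → ℝ)) : Prop :=
  ∀ x ∈ intrinsicInterior ℝ P, ¬ IsLatticePt x

/-- A facet of `P`: a non-empty exposed face of dimension `dim P - 1`. -/
def IsFacet {d : ℕ} (P F : Set (Fin d → ℝ)) : Prop :=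
  IsExposed ℝ P F ∧ F.Nonempty ∧ polyDim F + 1 = polyDim P

/-- An affine functional is integral on `P` if it takes integer values on all
lattice points of the affine hull of `P`. -/
def IsIntegralOn {d : ℕ} (P : Set (Fin d → ℝ)) (u : (Fin d → ℝ) →ᵃ[ℝ] ℝ) : Prop :=
  ∀ y ∈ affineSpan ℝ P, IsLatticePt y → ∃ z : ℤ, u y = (z : ℝ)

/-- `P` is reflexive: there is a lattice point `x` in the relative interior of `P`
such that every facet of `P` has lattice distance one from `x`, i.e. for every facet `F`
there is an integral affine functional that is constant on `F` and exceeds its value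
at `x` by exactly `1`. -/
def IsReflexivePolytope {d : ℕ} (P : Set (Fin d → ℝ)) : Prop :=
  ∃ x ∈ intrinsicInterior ℝ P, IsLatticePt x ∧
    ∀ F : Set (Fin d → ℝ), IsFacet P F →
      ∃ u : (Fin d → ℝ) →ᵃ[ℝ] ℝ, IsIntegralOn P u ∧ ∀ f ∈ F, u f = u x + 1

/-- `P` is Gorenstein if some positive integer multiple `r • P` is reflexive. -/
def IsGorenstein {d : ℕ} (P : Set (Fin d → ℝ)) : Prop :=
  ∃ r : ℕ, 0 < r ∧ IsReflexivePolytope ((r : ℝ) • P)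

/-- `P` is Gorenstein of codegree `r` if `r • P` is reflexive (`r` positive). -/
def IsGorensteinOfCodeg {d : ℕ} (P : Set (Fin d → ℝ)) (r : ℕ) : Prop :=
  0 < r ∧ IsReflexivePolytope ((r : ℝ) • P)

/-- The codegree of `P`: the smallest positive integer `r` such that `r • P` is not hollow. -/
noncomputable def polyCodeg {d : ℕ} (P : Set (Fin d → ℝ)) : ℕ :=
  sInf {r : ℕ | 0 < r ∧ ¬ IsHollow ((r : ℝ) • P)}

/-- The degree of `P`: `dim P + 1 - codeg P`. -/
noncomputable def polyDeg {d : ℕ} (P : Set (Fin d → ℝ)) : ℕ :=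
  polyDim P + 1 - polyCodeg P

/-- Unimodular equivalence of lattice polytopes: an affine map carrying `P` onto `Q`,
with an affine inverse on affine hulls, such that both maps preserve lattice points of
the affine hulls. -/
def LatticeIso {d e : ℕ} (P : Set (Fin d → ℝ)) (Q : Set (Fin e → ℝ)) : Prop :=
  ∃ (f : (Fin d → ℝ) →ᵃ[ℝ] (Fin e → ℝ)) (g : (Fin e → ℝ) →ᵃ[ℝ] (Fin d → ℝ)),
    f '' P = Q ∧ g '' Q = P ∧
    (∀ x ∈ affineSpan ℝ P, g (f x) = x) ∧ (∀ y ∈ affineSpan ℝ Q, f (g y) = y) ∧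
    (∀ x ∈ affineSpan ℝ P, IsLatticePt x → IsLatticePt (f x)) ∧
    (∀ y ∈ affineSpan ℝ Q, IsLatticePt y → IsLatticePt (g y))

/-- The lattice pyramid `conv(P' × {0}, (0,1))` over `P' ⊆ ℝ^m`. -/
def pyramidOver {m : ℕ} (P' : Set (Fin m → ℝ)) : Set (Fin (m + 1) → ℝ) :=
  convexHull ℝ ((fun x => Fin.snoc x (0 : ℝ)) '' P' ∪ {Fin.snoc (0 : Fin m → ℝ) (1 : ℝ)})

/-- `P` is a lattice pyramid if it is a single lattice point or is isomorphic to a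
lattice pyramid over a lattice polytope. -/
def IsLatticePyramid {d : ℕ} (P : Set (Fin d → ℝ)) : Prop :=
  (∃ x : Fin d → ℝ, IsLatticePt x ∧ P = {x}) ∨
  ∃ (m : ℕ) (P' : Set (Fin m → ℝ)), IsLatticePolytope P' ∧ LatticeIso P (pyramidOver P')

/-- The Cayley polytope `P_1 * ⋯ * P_l ⊆ ℝ^{n+l}` of `P_1, …, P_l ⊆ ℝ^n`:
the convex hull of the sets `P_i × {e_i}`. -/
def cayley {n l : ℕ} (P : Fin l → Set (Fin n → ℝ)) : Set (Fin (n + l) → ℝ) :=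
  convexHull ℝ (⋃ i : Fin l, (fun x => Fin.append x (Pi.single i (1 : ℝ))) '' P i)

/-- The Cayley polytope `F * G ⊆ ℝ^{n+2}` of two polytopes `F, G ⊆ ℝ^n`. -/
def cayleyTwo {n : ℕ} (F G : Set (Fin n → ℝ)) : Set (Fin (n + 2) → ℝ) :=
  convexHull ℝ
    ((fun x => Fin.append x ![(1 : ℝ), 0]) '' F ∪ (fun x => Fin.append x ![(0 : ℝ), 1]) '' G)

/-- `P` is a Cayley join of `F` and `G` if `P ≅ F * G` and `dim F + dim G = dim P - 1`. -/
def IsCayleyJoin {d n : ℕ} (P : Set (Fin d → ℝ)) (F G : Set (Fin n → ℝ)) : Prop :=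
  LatticeIso P (cayleyTwo F G) ∧ polyDim F + polyDim G + 1 = polyDim P

/-- `P` is reducible with factors `F` and `G`: a Cayley join with
`codeg F + codeg G = codeg P`. -/
def IsReducibleWith {d n : ℕ} (P : Set (Fin d → ℝ)) (F G : Set (Fin n → ℝ)) : Prop :=
  IsCayleyJoin P F G ∧ polyCodeg F + polyCodeg G = polyCodeg P

/-- `P` is reducible: it is a single lattice point (by convention) or is reducible
with some factors `F` and `G` which are lattice polytopes. -/
def IsReducible {d : ℕ} (P : Set (Fin d → ℝ)) : Prop :=
  (∃ x : Fin d → ℝ, IsLatticePt x ∧ P = {x}) ∨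
  ∃ (n : ℕ) (F G : Set (Fin n → ℝ)), IsLatticePolytope F ∧ IsLatticePolytope G ∧
    IsReducibleWith P F G

/-- `P` is a Cayley polytope: a single lattice point, or isomorphic to a Cayley polytope
of `l > 1` lattice polytopes. -/
def IsCayleyPolytope {d : ℕ} (P : Set (Fin d → ℝ)) : Prop :=
  (∃ x : Fin d → ℝ, IsLatticePt x ∧ P = {x}) ∨
  ∃ (n l : ℕ) (Q : Fin l → Set (Fin n → ℝ)), 1 < l ∧ (∀ i, IsLatticePolytope (Q i)) ∧
    LatticeIso P (cayley Q)

/-- `P` is IDP if for every `k ≥ 2` every lattice point of `k • P` is a sum of `k`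
lattice points of `P`. -/
def IsIDP {d : ℕ} (P : Set (Fin d → ℝ)) : Prop :=
  ∀ k : ℕ, 2 ≤ k → ∀ x : Fin d → ℝ, IsLatticePt x → x ∈ (k : ℝ) • P →
    ∃ p : Fin k → (Fin d → ℝ), (∀ i, p i ∈ P ∧ IsLatticePt (p i)) ∧ x = ∑ i, p i

/-- The standard simplex `Δ_s = conv(0, e_1, …, e_s) ⊆ ℝ^s`. -/
def stdSimplexLP (s : ℕ) : Set (Fin s → ℝ) :=
  convexHull ℝ (insert 0 (Set.range fun i : Fin s => Pi.single i (1 : ℝ)))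

/-- The product of `F ⊆ ℝ^m` and `G ⊆ ℝ^n` inside `ℝ^{m+n}`. -/
def prodPoly {m n : ℕ} (F : Set (Fin m → ℝ)) (G : Set (Fin n → ℝ)) : Set (Fin (m + n) → ℝ) :=
  (fun p : (Fin m → ℝ) × (Fin n → ℝ) => Fin.append p.1 p.2) '' (F ×ˢ G)

/-- The free join `conv(F × 0 × {0} ∪ 0 × G × {1}) ⊆ ℝ^m × ℝ^n × ℝ`. -/
def freeJoin {m n : ℕ} (F : Set (Fin m → ℝ)) (G : Set (Fin n → ℝ)) :
    Set (Fin (m + n + 1) → ℝ) :=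
  convexHull ℝ
    ((fun x => Fin.snoc (Fin.append x (0 : Fin n → ℝ)) (0 : ℝ)) '' F ∪
     (fun y => Fin.snoc (Fin.append (0 : Fin m → ℝ) y) (1 : ℝ)) '' G)

theorem conic_carath {Φ M : Type*} [Fintype Φ] [AddCommGroup M] [Module ℝ M]
    (g : Φ → M) (c : Φ → ℝ) (hc : ∀ k, 0 ≤ c k) :
    ∃ c' : Φ → ℝ, (∀ k, 0 ≤ c' k) ∧ (∀ k, c k = 0 → c' k = 0) ∧
      ∑ k, c' k • g k = ∑ k, c k • g k ∧ LinearIndepOn ℝ g {k | c' k ≠ 0} := by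
  classical
  let A : Set (Φ → ℝ) := {c' | (∀ k, 0 ≤ c' k) ∧ (∀ k, c k = 0 → c' k = 0) ∧
      ∑ k, c' k • g k = ∑ k, c k • g k}
  have hA : A.Nonempty := ⟨c, hc, fun _ h => h, rfl⟩
  let m : (Φ → ℝ) → ℕ := fun c' => (Finset.univ.filter fun k => c' k ≠ 0).card
  obtain ⟨c', hc'A, hmin⟩ := WellFounded.has_min (measure m).wf A hA
  refine ⟨c', hc'A.1, hc'A.2.1, hc'A.2.2, ?_⟩
  by_contra hli
  have hset : {k | c' k ≠ 0} = ((Finset.univ.filter fun k => c' k ≠ 0 : Finset Φ) : Set Φ) := by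
    ext; simp
  rw [hset, not_linearIndepOn_finset_iff] at hli
  have key : ∃ b : Φ → ℝ, (∀ k, c' k = 0 → b k = 0) ∧ ∑ k, b k • g k = 0 ∧ ∃ k, 0 < b k := by
    obtain ⟨f, hf, i, hi, hfi⟩ := hli
    have h1 : ∑ k, (if c' k ≠ 0 then f k else 0) • g k = 0 := by
      rw [← hf, Finset.sum_filter]
      refine Finset.sum_congr rfl fun k _ => ?_
      split_ifs <;> simp
    have hi' : c' i ≠ 0 := by simpa using hi
    rcases lt_or_gt_of_ne hfi with h | h
    · refine ⟨fun k => -(if c' k ≠ 0 then f k else 0), ?_, ?_, i, ?_⟩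
      · intro k hk; simp [hk]
      · simp only [neg_smul, Finset.sum_neg_distrib, h1, neg_zero]
      · simp [hi', h]
    · refine ⟨fun k => (if c' k ≠ 0 then f k else 0), ?_, h1, i, ?_⟩
      · intro k hk; simp [hk]
      · simp [hi', h]
  obtain ⟨b, hb0, hbs, hbp⟩ := key
  have hne : (Finset.univ.filter fun k => 0 < b k).Nonempty := by
    obtain ⟨k, hk⟩ := hbp; exact ⟨k, by simpa using hk⟩
  obtain ⟨k0, hk0, hk0min⟩ := Finset.exists_min_image _ (fun k => c' k / b k) hne
  have hbk0 : 0 < b k0 := by simpa using hk0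
  set t := c' k0 / b k0 with ht
  have ht0 : 0 ≤ t := div_nonneg (hc'A.1 k0) hbk0.le
  let c'' : Φ → ℝ := fun k => c' k - t * b k
  have hc'' : c'' ∈ A := by
    refine ⟨?_, ?_, ?_⟩
    · intro k
      by_cases hk : 0 < b k
      · have := hk0min k (by simpa using hk)
        have h2 : t * b k ≤ c' k := by rwa [← le_div_iff₀ hk]
        simp only [c'']; linarith
      · have h2 : t * b k ≤ 0 := mul_nonpos_of_nonneg_of_nonpos ht0 (not_lt.mp hk)
        have := hc'A.1 k
        simp only [c'']; linarith
    · intro k hk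
      have h1 := hc'A.2.1 k hk
      simp [c'', h1, hb0 k h1]
    · simp only [c'', sub_smul, mul_smul, Finset.sum_sub_distrib, ← Finset.smul_sum, hbs,
        smul_zero, sub_zero]
      exact hc'A.2.2
  apply hmin c'' hc''
  change m c'' < m c'
  apply Finset.card_lt_card
  rw [Finset.ssubset_iff_of_subset]
  · refine ⟨k0, ?_, ?_⟩
    · simp only [Finset.mem_filter, Finset.mem_univ, true_and]
      intro h; rw [hb0 k0 h] at hbk0; exact lt_irrefl _ hbk0
    · simp [c'', ht, hbk0.ne']
  · intro k
    simp only [Finset.mem_filter, Finset.mem_univ, true_and]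
    intro hk hk'
    apply hk; simp [c'', hk', hb0 k hk']

theorem growth {Φ M ι : Type*} [Fintype Φ] [DecidableEq ι] [AddCommGroup M] [Module ℝ M]
    [FiniteDimensional ℝ M] (g : Φ → M) (κ : Φ → ι) (a : Φ → ℝ) (ha : ∀ k, 0 < a k) :
    ∀ (n : ℕ) (W : Submodule ℝ M) (I0 : Finset ι), Module.finrank ℝ M ≤ n + Module.finrank ℝ W →
      ∑ k, a k • g k ∈ W →
    ∃ I : Finset ι, I0 ⊆ I ∧ I.card + Module.finrank ℝ W ≤ I0.card + Module.finrank ℝ M ∧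
      ∀ φ : M →ₗ[ℝ] ℝ, (∀ w ∈ W, φ w = 0) → (∀ k, κ k ∈ I → 0 ≤ φ (g k)) →
        ∀ k, κ k ∈ I → φ (g k) = 0 := by
  classical
  intro n
  induction n with
  | zero =>
    intro W I0 hn _
    have hW : W = ⊤ := by
      apply Submodule.eq_top_of_finrank_eq
      have := Submodule.finrank_le W
      omega
    refine ⟨I0, subset_rfl, ?_, ?_⟩
    · have := Submodule.finrank_le W
      omega
    · intro φ hφ _ k _; exact hφ _ (by rw [hW]; trivial)
  | succ n ih =>
    intro W I0 hn hrel
    by_cases hall : ∀ k, κ k ∈ I0 → g k ∈ W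
    · refine ⟨I0, subset_rfl, ?_, fun φ hφ _ k hk => hφ _ (hall k hk)⟩
      have := Submodule.finrank_le W
      omega
    push Not at hall
    obtain ⟨k0, hk0, hgk0⟩ := hall
    obtain ⟨c', hc'0, hc's, hc'sum, hli⟩ := conic_carath (fun k => W.mkQ (g k))
      (fun k => if k = k0 then 0 else a k) (by intro k; split_ifs <;> simp [(ha k).le])
    have hsum : a k0 • g k0 + ∑ k, c' k • g k ∈ W := by
      rw [← Submodule.Quotient.mk_eq_zero W, ← Submodule.mkQ_apply, map_add, map_sum]
      simp only [map_smul]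
      rw [hc'sum]
      have h0 : W.mkQ (∑ k, a k • g k) = 0 := by
        rw [Submodule.mkQ_apply, Submodule.Quotient.mk_eq_zero]; exact hrel
      rw [← h0, map_sum]
      have e1 := Finset.add_sum_erase Finset.univ (fun k => W.mkQ (a k • g k)) (Finset.mem_univ k0)
      have e2 := Finset.add_sum_erase Finset.univ
        (fun k => (if k = k0 then 0 else a k) • W.mkQ (g k)) (Finset.mem_univ k0)
      rw [← e1, ← e2]
      simp only [if_true, zero_smul, zero_add, map_smul]
      congr 1
      refine Finset.sum_congr rfl fun k hk => ?_
      rw [if_neg (Finset.ne_of_mem_erase hk)]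
    set T : Finset Φ := Finset.univ.filter fun k => c' k ≠ 0 with hT
    have hTne : T.Nonempty := by
      by_contra h
      rw [Finset.not_nonempty_iff_eq_empty] at h
      have hz : ∀ k, c' k = 0 := by
        intro k; by_contra hk
        have : k ∈ T := by simp [hT, hk]
        rw [h] at this; simp at this
      simp only [hz, zero_smul, Finset.sum_const_zero, add_zero] at hsum
      exact hgk0 ((W.smul_mem_iff (ha k0).ne').1 hsum)
    let W' : Submodule ℝ M := W ⊔ Submodule.span ℝ (g '' T)
    have hfr : Module.finrank ℝ W + T.card ≤ Module.finrank ℝ W' := by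
      let L : W' →ₗ[ℝ] (M ⧸ W) := W.mkQ.domRestrict W'
      have h1 := L.finrank_range_add_finrank_ker
      have h2 : T.card ≤ Module.finrank ℝ (LinearMap.range L) := by
        have hset : {k | c' k ≠ 0} = (T : Set Φ) := by ext; simp [hT]
        rw [hset] at hli
        have hli' : LinearIndependent ℝ (fun k : T => W.mkQ (g k)) := hli
        have h3 := finrank_span_eq_card hli'
        rw [Fintype.card_coe] at h3
        rw [← h3]
        apply Submodule.finrank_mono
        rw [Submodule.span_le]
        rintro _ ⟨k, rfl⟩
        exact ⟨⟨g k, Submodule.mem_sup_right (Submodule.subset_span ⟨k, k.2, rfl⟩)⟩, rfl⟩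
      have h4 : Module.finrank ℝ W ≤ Module.finrank ℝ (LinearMap.ker L) := by
        let j : W →ₗ[ℝ] (LinearMap.ker L) := 
          LinearMap.codRestrict _ (Submodule.inclusion (le_sup_left : W ≤ W')) (by
            intro x; simp [L])
        apply LinearMap.finrank_le_finrank_of_injective (f := j)
        intro x y hxy
        have := congrArg (fun z : LinearMap.ker L => ((z : W') : M)) hxy
        exact Subtype.ext this
      omega
    have hTc : 0 < T.card := hTne.card_pos
    obtain ⟨I, hI0, hIc, hI⟩ := ih W' (I0 ∪ T.image κ) (by omega)
      (Submodule.mem_sup_left hrel)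
    refine ⟨I, Finset.union_subset_left hI0, ?_, ?_⟩
    · have h1 := Finset.card_union_le I0 (T.image κ)
      have h2 : (T.image κ).card ≤ T.card := Finset.card_image_le
      omega
    · intro φ hφ hpos
      apply hI φ _ hpos
      have h1 := hφ _ hsum
      rw [map_add, map_sum] at h1
      simp only [map_smul, smul_eq_mul] at h1
      have hTI : ∀ k, c' k ≠ 0 → κ k ∈ I := fun k hk =>
        hI0 (Finset.mem_union_right _ (Finset.mem_image_of_mem κ (by simp [hT, hk])))
      have hnn : ∀ k ∈ Finset.univ, 0 ≤ c' k * φ (g k) := by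
        intro k _
        by_cases hk : c' k = 0
        · simp [hk]
        · exact mul_nonneg (hc'0 k) (hpos k (hTI k hk))
      have h2 : 0 ≤ a k0 * φ (g k0) := mul_nonneg (ha k0).le
        (hpos k0 (hI0 (Finset.mem_union_left _ hk0)))
      have h3 : ∑ k, c' k * φ (g k) = 0 := by
        have := Finset.sum_nonneg hnn
        linarith
      rw [Finset.sum_eq_zero_iff_of_nonneg hnn] at h3
      have h5 : W' ≤ LinearMap.ker φ := by
        apply sup_le
        · intro w hw; exact hφ w hw
        · rw [Submodule.span_le]
          rintro _ ⟨k, hk, rfl⟩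
          have hk' : c' k ≠ 0 := by simpa [hT] using hk
          have := h3 k (Finset.mem_univ k)
          simpa [hk'] using this
      intro w hw
      exact h5 hw

theorem core {Φ : Type*} [Fintype Φ] {r : ℕ} (κ : Φ → Fin r)
    (S : Submodule ℝ (Φ → ℝ))
    (hind : ∀ i, (fun k => if κ k = i then (1 : ℝ) else 0) ∈ S)
    (c : Φ → ℝ) (hc : ∀ k, 0 < c k) (hsum : ∀ i, ∑ k, (if κ k = i then c k else 0) = 1)
    (hr : Module.finrank ℝ S + 2 ≤ 2 * r) :
    ∃ (I : Finset (Fin r)) (f : Fin r → Φ), I.Nonempty ∧ Iᶜ.Nonempty ∧ (∀ i, κ (f i) = i) ∧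
      (∀ y ∈ S, (∀ k, 0 ≤ y k) → ∑ j ∈ Iᶜ, y (f j) ≤ ∑ k, c k * y k) ∧
      (∀ y ∈ S, (∀ k, 0 ≤ y k) → ∑ j ∈ Iᶜ, y (f j) = ∑ k, c k * y k →
        ∀ k, κ k ∈ I → y k = 0) ∧
      (∀ y ∈ S, (∀ k, κ k ∈ I → y k = 0) → ∑ k, c k * y k = ∑ j ∈ Iᶜ, y (f j)) := by
  classical
  let g : Φ → (S →ₗ[ℝ] ℝ) := fun k => (LinearMap.proj k).comp S.subtype
  have hg : ∀ k (y : S), g k y = (y : Φ → ℝ) k := fun k y => rfl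
  obtain ⟨c', hc'0, -, hc's, hli⟩ := conic_carath g c (fun k => (hc k).le)
  have hn : ∀ y ∈ S, ∑ k, c k * y k = ∑ k, c' k * y k := by
    intro y hy
    have := congrArg (fun φ : S →ₗ[ℝ] ℝ => φ ⟨y, hy⟩) hc's
    simpa [hg, LinearMap.sum_apply] using this.symm
  have hsum' : ∀ i, ∑ k, (if κ k = i then c' k else 0) = 1 := by
    intro i
    rw [← hsum i]
    have := hn _ (hind i)
    simpa using this.symm
  have hf : ∀ i, ∃ k, κ k = i ∧ c' k ≠ 0 := by
    intro i
    by_contra h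
    push Not at h
    have : ∑ k, (if κ k = i then c' k else 0) = 0 := by
      apply Finset.sum_eq_zero
      intro k _
      split_ifs with hk
      · exact h k hk
      · rfl
    rw [hsum' i] at this
    exact one_ne_zero this
  choose f hκf hc'f using hf
  have hfinj : Function.Injective f := fun a b h => by rw [← hκf a, ← hκf b, h]
  let I0 : Finset (Fin r) := Finset.univ.filter fun i => ∃ k, κ k = i ∧ k ≠ f i ∧ c' k ≠ 0
  let T : Finset Φ := Finset.univ.filter fun k => c' k ≠ 0
  let W : Submodule ℝ (S →ₗ[ℝ] ℝ) := Submodule.span ℝ (g '' T)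
  have hWT : Module.finrank ℝ W = T.card := by
    have hset : {k | c' k ≠ 0} = (T : Set Φ) := by ext; simp [T]
    rw [hset] at hli
    have hli' : LinearIndependent ℝ (fun k : T => g k) := hli
    have h3 := finrank_span_eq_card hli'
    rw [Fintype.card_coe] at h3
    rw [← h3]
    have : g '' (T : Set Φ) = Set.range (fun k : T => g k) := by
      ext; simp
    exact congrArg (fun s => Module.finrank ℝ (Submodule.span ℝ s)) this
  have hTcard : r + I0.card ≤ T.card := by
    have h1 : ∀ i ∈ I0, ∃ k, κ k = i ∧ k ≠ f i ∧ c' k ≠ 0 := by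
      intro i hi; simpa [I0] using hi
    haveI : Nonempty Φ := ⟨f ⟨0, by omega⟩⟩
    choose! e he1 he2 he3 using h1
    have hd : Disjoint (Finset.univ.image f) (I0.image e) := by
      rw [Finset.disjoint_left]
      intro k hk hk'
      obtain ⟨i, -, rfl⟩ := Finset.mem_image.1 hk
      obtain ⟨j, hj, hje⟩ := Finset.mem_image.1 hk'
      have : j = i := by rw [← he1 j hj, hje, hκf]
      subst this
      exact he2 j hj hje
    have hsub : Finset.univ.image f ∪ I0.image e ⊆ T := by
      intro k hk
      rcases Finset.mem_union.1 hk with hk | hk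
      · obtain ⟨i, -, rfl⟩ := Finset.mem_image.1 hk
        simp [T, hc'f]
      · obtain ⟨j, hj, rfl⟩ := Finset.mem_image.1 hk
        simp [T, he3 j hj]
    have h2 := Finset.card_le_card hsub
    rw [Finset.card_union_of_disjoint hd, Finset.card_image_of_injective _ hfinj,
      Finset.card_image_of_injOn, Finset.card_univ, Fintype.card_fin] at h2
    · exact h2
    · intro a ha b hb hab
      rw [← he1 a ha, ← he1 b hb, hab]
  have hrpos : 0 < r := by omega
  have hM : Module.finrank ℝ (S →ₗ[ℝ] ℝ) = Module.finrank ℝ S := by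
    exact Subspace.dual_finrank_eq
  have hrel : ∑ k, c k • g k ∈ W := by
    rw [← hc's]
    apply Submodule.sum_mem
    intro k _
    by_cases hk : c' k = 0
    · simp [hk]
    · exact W.smul_mem _ (Submodule.subset_span ⟨k, by simp [T, hk], rfl⟩)
  obtain ⟨I, hI1, hIc, hI⟩ := growth g κ c hc (Module.finrank ℝ (S →ₗ[ℝ] ℝ)) W
    (insert ⟨0, hrpos⟩ I0) (by omega) hrel
  have hIcard : I.card < r := by
    have := Finset.card_insert_le (⟨0, hrpos⟩ : Fin r) I0
    omega
  have hI0 : I0 ⊆ I := (Finset.subset_insert _ _).trans hI1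
  have hsing : ∀ k, κ k ∉ I → k ≠ f (κ k) → c' k = 0 := by
    intro k hk hkf
    by_contra h
    exact hk (hI0 (by simp only [I0, Finset.mem_filter, Finset.mem_univ, true_and]; exact ⟨k, rfl, hkf, h⟩))
  have hone : ∀ j, j ∉ I → c' (f j) = 1 := by
    intro j hj
    rw [← hsum' j, Finset.sum_eq_single (f j)]
    · simp [hκf]
    · intro k _ hk
      split_ifs with h
      · subst h; exact hsing k hj hk
      · rfl
    · simp
  have hdec : ∀ y : Φ → ℝ, ∑ k, c' k * y k =
      ∑ k, (if κ k ∈ I then c' k * y k else 0) + ∑ j ∈ Iᶜ, y (f j) := by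
    intro y
    have h1 : ∑ j ∈ Iᶜ, y (f j) = ∑ k, (if κ k ∈ I then 0 else c' k * y k) := by
      rw [← Finset.sum_subset (Finset.subset_univ (Iᶜ.image f)), Finset.sum_image]
      · refine Finset.sum_congr rfl fun j hj => ?_
        have hj' : j ∉ I := by simpa using hj
        rw [hκf, if_neg hj', hone j hj', one_mul]
      · intro a _ b _ h; exact hfinj h
      · intro k _ hk
        split_ifs with h
        · rfl
        · rw [hsing k h, zero_mul]
          intro hkf
          exact hk (Finset.mem_image.2 ⟨κ k, by simpa using h, hkf.symm⟩)
    rw [h1, ← Finset.sum_add_distrib]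
    refine Finset.sum_congr rfl fun k _ => ?_
    split_ifs <;> simp
  refine ⟨I, f, ⟨_, hI1 (Finset.mem_insert_self _ _)⟩, ?_, hκf, ?_, ?_, ?_⟩
  · rw [← Finset.card_pos, Finset.card_compl, Fintype.card_fin]; omega
  · intro y hy hy0
    rw [hn y hy, hdec y]
    have : 0 ≤ ∑ k, (if κ k ∈ I then c' k * y k else 0) := by
      apply Finset.sum_nonneg
      intro k _
      split_ifs
      · exact mul_nonneg (hc'0 k) (hy0 k)
      · exact le_rfl
    linarith
  · intro y hy hy0 heq
    rw [hn y hy, hdec y] at heq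
    have h0 : ∑ k, (if κ k ∈ I then c' k * y k else 0) = 0 := by linarith
    rw [Finset.sum_eq_zero_iff_of_nonneg] at h0
    swap
    · intro k _
      split_ifs
      · exact mul_nonneg (hc'0 k) (hy0 k)
      · exact le_rfl
    have hz : ∀ k, κ k ∈ I → c' k ≠ 0 → y k = 0 := by
      intro k hk hck
      have := h0 k (Finset.mem_univ k)
      rw [if_pos hk] at this
      simpa [hck] using this
    let v : Φ → ℝ := y - ∑ j ∈ Iᶜ, y (f j) • (fun k => if κ k = j then (1 : ℝ) else 0)
    have hv : v ∈ S := S.sub_mem hy (S.sum_mem fun j _ => S.smul_mem _ (hind j))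
    have hvk : ∀ k, v k = y k - if κ k ∈ I then 0 else y (f (κ k)) := by
      intro k
      simp only [v, Pi.sub_apply, Finset.sum_apply, Pi.smul_apply, smul_eq_mul, mul_ite, mul_one,
        mul_zero, Finset.sum_ite_eq, Finset.mem_compl]
      split_ifs <;> simp_all
    have hvI : ∀ k, κ k ∈ I → v k = y k := by
      intro k hk; rw [hvk, if_pos hk, sub_zero]
    let φ : (S →ₗ[ℝ] ℝ) →ₗ[ℝ] ℝ := Module.Dual.eval ℝ S ⟨v, hv⟩
    have hφ : ∀ k, φ (g k) = v k := fun k => rfl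
    have hW0 : ∀ w ∈ W, φ w = 0 := by
      have : W ≤ LinearMap.ker φ := by
        rw [Submodule.span_le]
        rintro _ ⟨k, hk, rfl⟩
        have hk' : c' k ≠ 0 := by simpa [T] using hk
        change φ (g k) = 0
        rw [hφ]
        by_cases hkI : κ k ∈ I
        · rw [hvI k hkI]; exact hz k hkI hk'
        · rw [hvk, if_neg hkI]
          have : k = f (κ k) := by
            by_contra h; exact hk' (hsing k hkI h)
          rw [← this, sub_self]
      intro w hw; exact this hw
    intro k hk
    have := hI φ hW0 (fun k hk => by rw [hφ, hvI k hk]; exact hy0 k) k hk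
    rw [hφ, hvI k hk] at this
    exact this
  · intro y hy hyI
    rw [hn y hy, hdec y]
    have : ∑ k, (if κ k ∈ I then c' k * y k else 0) = 0 := by
      apply Finset.sum_eq_zero
      intro k _
      split_ifs with h
      · rw [hyI k h, mul_zero]
      · rfl
    rw [this, zero_add]

theorem core2 {Φ : Type*} [Fintype Φ] {r : ℕ} (κ : Φ → Fin r)
    (S : Submodule ℝ (Φ → ℝ))
    (hind : ∀ i, (fun k => if κ k = i then (1 : ℝ) else 0) ∈ S)
    (c : Φ → ℝ) (hc : ∀ k, 0 < c k)
    (I : Finset (Fin r)) (f : Fin r → Φ) (hκf : ∀ i, κ (f i) = i)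
    (h2 : ∀ y ∈ S, (∀ k, 0 ≤ y k) → ∑ j ∈ Iᶜ, y (f j) = ∑ k, c k * y k →
        ∀ k, κ k ∈ I → y k = 0)
    (h3 : ∀ y ∈ S, (∀ k, κ k ∈ I → y k = 0) → ∑ k, c k * y k = ∑ j ∈ Iᶜ, y (f j))
    (hgen : ∀ y ∈ S, (∀ k, 0 ≤ y k) → ∃ a ∈ S, ∃ b ∈ S, (∀ k, 0 ≤ a k) ∧ (∀ k, 0 ≤ b k) ∧
      y = a + b ∧ ∑ j ∈ Iᶜ, a (f j) = 0 ∧ ∑ j ∈ Iᶜ, b (f j) = ∑ k, c k * b k) :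
    ∀ y ∈ S, (∀ k, 0 ≤ y k) → ∑ j ∈ Iᶜ, y (f j) = 0 → ∀ k, κ k ∉ I → y k = 0 := by
  classical
  intro v hv hv0 hvl
  have h1S : (fun _ => (1 : ℝ)) ∈ S := by
    have : (fun _ : Φ => (1 : ℝ)) = ∑ i, (fun k => if κ k = i then (1 : ℝ) else 0) := by
      ext k; simp
    rw [this]; exact S.sum_mem fun i _ => hind i
  have hIS : (fun k => if κ k ∈ I then (1 : ℝ) else 0) ∈ S := by
    have : (fun k => if κ k ∈ I then (1 : ℝ) else 0) =
        ∑ i ∈ I, (fun k => if κ k = i then (1 : ℝ) else 0) := by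
      ext k; simp
    rw [this]; exact S.sum_mem fun i _ => hind i
  obtain ⟨M, hM⟩ : ∃ M : ℝ, ∀ k, v k ≤ M :=
    ⟨∑ k, v k, fun k => Finset.single_le_sum (fun i _ => hv0 i) (Finset.mem_univ k)⟩
  obtain ⟨a, haS, b, hbS, ha0, hb0, hab, hal, hbl⟩ := hgen (M • (fun _ => (1 : ℝ)) - v)
    (S.sub_mem (S.smul_mem _ h1S) hv) (by intro k; simpa using hM k)
  have hbI := h2 b hbS hb0 hbl
  have hk : ∀ k, M - v k = a k + b k := by
    intro k; have := congrFun hab k; simpa using this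
  let q : Φ → ℝ := v + a - M • (fun k => if κ k ∈ I then (1 : ℝ) else 0)
  have hqS : q ∈ S := S.sub_mem (S.add_mem hv haS) (S.smul_mem _ hIS)
  have hqI : ∀ k, κ k ∈ I → q k = 0 := by
    intro k hkI
    have := hk k
    rw [hbI k hkI] at this
    simp only [q, Pi.sub_apply, Pi.add_apply, Pi.smul_apply, if_pos hkI, smul_eq_mul, mul_one]
    linarith
  have hqJ : ∀ k, κ k ∉ I → q k = v k + a k := by
    intro k hkI
    simp [q, if_neg hkI]
  have hq0 : ∀ k, 0 ≤ q k := by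
    intro k
    by_cases hkI : κ k ∈ I
    · rw [hqI k hkI]
    · rw [hqJ k hkI]; exact add_nonneg (hv0 k) (ha0 k)
  have hql : ∑ j ∈ Iᶜ, q (f j) = 0 := by
    have : ∑ j ∈ Iᶜ, q (f j) = ∑ j ∈ Iᶜ, v (f j) + ∑ j ∈ Iᶜ, a (f j) := by
      rw [← Finset.sum_add_distrib]
      refine Finset.sum_congr rfl fun j hj => hqJ _ ?_
      rw [hκf]; simpa using hj
    rw [this, hvl, hal, add_zero]
  have hn := h3 q hqS hqI
  rw [hql, Finset.sum_eq_zero_iff_of_nonneg (fun k _ => mul_nonneg (hc k).le (hq0 k))] at hn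
  intro k hkJ
  have h5 := hn k (Finset.mem_univ k)
  have h6 : q k = 0 := by simpa [(hc k).ne'] using h5
  rw [hqJ k hkJ] at h6
  have := hv0 k
  have := ha0 k
  linarith

theorem polar_lemma {D ι : Type*} [NormedAddCommGroup D] [NormedSpace ℝ D] [FiniteDimensional ℝ D]
    [Fintype ι] (w : ι → D) (h0 : (0 : D) ∈ interior (convexHull ℝ (Set.range w))) :
    ∃ Φ : Finset (D →L[ℝ] ℝ), (∀ f ∈ Φ, ∀ i, f (w i) ≤ 1) ∧
      (∀ f ∈ Φ, Submodule.span ℝ {x | ∃ i, x = w i ∧ f (w i) = 1} = ⊤) ∧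
      (∀ y, (∀ f ∈ Φ, f y ≤ 1) → y ∈ convexHull ℝ (Set.range w)) ∧
      ∃ c : (D →L[ℝ] ℝ) → ℝ, (∀ f ∈ Φ, 0 < c f) ∧ ∑ f ∈ Φ, c f • f = 0 := by
  classical
  let A : Set (D →L[ℝ] ℝ) := {f | ∀ i, f (w i) ≤ 1}
  have hAcl : IsClosed A := by
    have : A = ⋂ i, {f : D →L[ℝ] ℝ | f (w i) ≤ 1} := by ext; simp [A]
    rw [this]
    refine isClosed_iInter fun i => isClosed_le ?_ continuous_const
    exact (ContinuousLinearMap.apply ℝ ℝ (w i)).continuous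
  have hAconv : Convex ℝ A := by
    intro f hf g hg a b ha hb hab i
    have h1 := hf i
    have h2 := hg i
    simp only [add_apply, smul_apply, smul_eq_mul]
    nlinarith
  have hAle : ∀ f ∈ A, ∀ x ∈ convexHull ℝ (Set.range w), f x ≤ 1 := by
    intro f hf x hx
    have : convexHull ℝ (Set.range w) ⊆ {x | f x ≤ 1} := by
      apply convexHull_min
      · rintro _ ⟨i, rfl⟩; exact hf i
      · exact convex_halfSpace_le f.toLinearMap.isLinear 1
    exact this hx
  obtain ⟨ε, hε, hball⟩ := Metric.mem_nhds_iff.1 (mem_interior_iff_mem_nhds.1 h0)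
  have hAbd : Bornology.IsBounded A := by
    rw [isBounded_iff_forall_norm_le]
    refine ⟨2 / ε, fun f hf => ?_⟩
    apply ContinuousLinearMap.opNorm_le_bound _ (by positivity)
    have key : ∀ x : D, f x ≤ 2 / ε * ‖x‖ := by
      intro x
      by_cases hx : x = 0
      · simp [hx]
      have hxn : 0 < ‖x‖ := norm_pos_iff.2 hx
      have h1 : (ε / (2 * ‖x‖)) • x ∈ convexHull ℝ (Set.range w) := by
        apply hball
        rw [mem_ball_zero_iff, norm_smul, Real.norm_of_nonneg (by positivity)]
        field_simp
        linarith
      have h2 := hAle f hf _ h1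
      rw [map_smul, smul_eq_mul, div_mul_eq_mul_div, div_le_one (by positivity)] at h2
      rw [div_mul_eq_mul_div, le_div_iff₀ hε]
      linarith
    intro x
    rw [Real.norm_eq_abs, abs_le]
    have h1 := key x
    have h2 := key (-x)
    rw [map_neg, norm_neg] at h2
    constructor <;> linarith
  have hAcomp : IsCompact A := Metric.isCompact_of_isClosed_isBounded hAcl hAbd
  let E := A.extremePoints ℝ
  have hspan : ∀ f ∈ E, Submodule.span ℝ {x | ∃ i, x = w i ∧ f (w i) = 1} = ⊤ := by
    intro f hf
    by_contra hne
    obtain ⟨g, hg0, hg⟩ := Submodule.exists_le_ker_of_lt_top _ (lt_top_iff_ne_top.2 hne)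
    let g' : D →L[ℝ] ℝ := LinearMap.toContinuousLinearMap g
    have hg' : ∀ x, g' x = g x := fun x => rfl
    have hεex : ∃ δ : ℝ, 0 < δ ∧ ∀ i, f (w i) ≠ 1 → δ * |g (w i)| ≤ 1 - f (w i) := by
      have : ∀ i, ∃ δ : ℝ, 0 < δ ∧ (f (w i) ≠ 1 → δ * |g (w i)| ≤ 1 - f (w i)) := by
        intro i
        by_cases hi : f (w i) = 1
        · exact ⟨1, one_pos, fun h => absurd hi h⟩
        · have hlt : 0 < 1 - f (w i) := sub_pos.2 (lt_of_le_of_ne (hf.1 i) hi)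
          refine ⟨(1 - f (w i)) / (|g (w i)| + 1), by positivity, fun _ => ?_⟩
          rw [div_mul_eq_mul_div, div_le_iff₀ (by positivity)]
          nlinarith [abs_nonneg (g (w i))]
      choose δ hδ0 hδ using this
      rcases isEmpty_or_nonempty ι with he | he
      · exact ⟨1, one_pos, fun i => he.elim i⟩
      · obtain ⟨i0, hi0⟩ := Finite.exists_min δ
        refine ⟨δ i0, hδ0 i0, fun i hi => le_trans ?_ (hδ i hi)⟩
        exact mul_le_mul_of_nonneg_right (hi0 i) (abs_nonneg _)
    obtain ⟨δ, hδ0, hδ⟩ := hεex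
    have hmem : ∀ t : ℝ, |t| = δ → f + t • g' ∈ A := by
      intro t ht i
      simp only [add_apply, smul_apply, smul_eq_mul, hg']
      by_cases hi : f (w i) = 1
      · have : g (w i) = 0 := by
          have : w i ∈ LinearMap.ker g := hg (Submodule.subset_span ⟨i, rfl, hi⟩)
          exact this
        rw [this, hi]; simp
      · have h1 := hδ i hi
        have h2 : t * g (w i) ≤ δ * |g (w i)| := by
          rw [← ht, ← abs_mul]; exact le_abs_self _
        linarith
    have h1 := hmem δ (abs_of_pos hδ0)
    have h2 := hmem (-δ) (by rw [abs_neg, abs_of_pos hδ0])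
    have h3 : f ∈ openSegment ℝ (f + δ • g') (f + (-δ) • g') := by
      refine ⟨1/2, 1/2, by norm_num, by norm_num, by norm_num, ?_⟩
      ext x
      simp only [add_apply, smul_apply, smul_eq_mul]
      ring
    have h4 := hf.2 h1 h2 h3
    apply hg0
    ext x
    have h5 := congrArg (fun φ : D →L[ℝ] ℝ => φ x) h4
    simp only [add_apply, smul_apply, smul_eq_mul, hg'] at h5
    have : δ * g x = 0 := by linarith
    simpa [hδ0.ne'] using this
  have hEfin : E.Finite := by
    have hinj : Set.InjOn (fun f : D →L[ℝ] ℝ => {i | f (w i) = 1}) E := by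
      intro f hf g hg hfg
      have hle : Submodule.span ℝ {x | ∃ i, x = w i ∧ f (w i) = 1} ≤
          LinearMap.ker (f - g : D →L[ℝ] ℝ).toLinearMap := by
        rw [Submodule.span_le]
        rintro _ ⟨i, rfl, hi⟩
        have hi' : i ∈ {i | g (w i) = 1} := by
          have h7 : i ∈ {i | f (w i) = 1} := hi
          exact (Set.ext_iff.1 hfg i).1 h7
        change (f - g) (w i) = 0
        rw [sub_apply, hi, hi', sub_self]
      rw [hspan f hf, top_le_iff] at hle
      ext x
      have : x ∈ LinearMap.ker (f - g : D →L[ℝ] ℝ).toLinearMap := by rw [hle]; trivial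
      have h6 : (f - g) x = 0 := this
      rw [sub_apply] at h6
      linarith
    exact Set.Finite.of_finite_image (Set.toFinite _) hinj
  have hhull : convexHull ℝ E = A := by
    have := closure_convexHull_extremePoints hAcomp hAconv
    rwa [(Set.Finite.isClosed_convexHull (𝕜 := ℝ) hEfin).closure_eq] at this
  refine ⟨hEfin.toFinset, ?_, ?_, ?_, ?_⟩
  · intro f hf i
    exact ((hEfin.mem_toFinset.1 hf).1) i
  · intro f hf; exact hspan f (hEfin.mem_toFinset.1 hf)
  · intro y hy
    by_contra hyn
    obtain ⟨f, u, hfu, huy⟩ := geometric_hahn_banach_closed_point (convex_convexHull ℝ _)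
      (Set.Finite.isClosed_convexHull (𝕜 := ℝ) (Set.finite_range w)) hyn
    have hu : 0 < u := by
      have := hfu 0 (interior_subset h0)
      simpa using this
    have hfA : u⁻¹ • f ∈ A := by
      intro i
      have := hfu (w i) (subset_convexHull ℝ _ ⟨i, rfl⟩)
      rw [smul_apply, smul_eq_mul, inv_mul_le_iff₀ hu]
      linarith
    have hsub : A ⊆ {f : D →L[ℝ] ℝ | f y ≤ 1} := by
      rw [← hhull]
      apply convexHull_min
      · intro f hf; exact hy f (hEfin.mem_toFinset.2 hf)
      · exact convex_halfSpace_le (ContinuousLinearMap.apply ℝ ℝ y).toLinearMap.isLinear 1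
    have := hsub hfA
    simp only [Set.mem_ofPred_eq, smul_apply, smul_eq_mul] at this
    rw [inv_mul_le_iff₀ hu] at this
    linarith
  · let σ : D →L[ℝ] ℝ := ∑ f ∈ hEfin.toFinset, f
    have hδ : ∃ δ : ℝ, 0 < δ ∧ (-δ) • σ ∈ A := by
      refine ⟨(1 + ∑ i, |σ (w i)|)⁻¹, by positivity, fun i => ?_⟩
      have h1 : |σ (w i)| ≤ ∑ i, |σ (w i)| :=
        Finset.single_le_sum (f := fun i => |σ (w i)|) (fun j _ => abs_nonneg _) (Finset.mem_univ i)
      rw [smul_apply, smul_eq_mul, neg_mul, ← mul_neg,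
        inv_mul_le_iff₀ (by positivity)]
      have := neg_le_abs (σ (w i))
      linarith
    obtain ⟨δ, hδ0, hδA⟩ := hδ
    rw [← hhull, ← hEfin.coe_toFinset, Finset.mem_convexHull'] at hδA
    obtain ⟨c, hc0, -, hcs⟩ := hδA
    refine ⟨fun f => c f + δ, fun f hf => by have := hc0 f hf; linarith, ?_⟩
    simp only [add_smul, Finset.sum_add_distrib, hcs]
    rw [← Finset.smul_sum]
    change (-δ) • σ + δ • σ = 0
    rw [← add_smul, neg_add_cancel, zero_smul]

theorem intr_pos {E : Type*} [NormedAddCommGroup E] [NormedSpace ℝ E] {R : Set E}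
    (w : E →ᵃ[ℝ] ℝ) (hw : ∀ y ∈ R, 0 ≤ w y) {q z : E} (hq : q ∈ R) (hwq : 0 < w q)
    (hz : z ∈ intrinsicInterior ℝ R) : 0 < w z := by
  obtain ⟨y, hy, rfl⟩ := mem_intrinsicInterior.1 hz
  have hqa : q ∈ affineSpan ℝ R := subset_affineSpan ℝ R hq
  let γ : ℝ → affineSpan ℝ R := fun t =>
    ⟨AffineMap.lineMap q (y : E) t, AffineMap.lineMap_mem t hqa y.2⟩
  have hγ : Continuous γ := by
    apply Continuous.subtype_mk
    exact AffineMap.lineMap_continuous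
  have hγ1 : γ 1 = y := by ext; simp [γ]
  have hev : ∀ᶠ t in nhds (1 : ℝ), γ t ∈ interior ((↑) ⁻¹' R : Set (affineSpan ℝ R)) := by
    apply hγ.continuousAt.eventually_mem
    rw [hγ1]
    exact isOpen_interior.mem_nhds hy
  obtain ⟨ε, hε, hb⟩ := Metric.eventually_nhds_iff.1 hev
  have h1 := interior_subset (hb (y := 1 + ε / 2) (by
    rw [Real.dist_eq]; rw [abs_of_pos] <;> linarith))
  have h2 := hw _ h1
  simp only [γ, AffineMap.apply_lineMap] at h2
  rw [AffineMap.lineMap_apply_module'] at h2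
  simp only [smul_eq_mul] at h2
  by_contra hneg
  push Not at hneg
  nlinarith

theorem mem_intr {E Φ : Type*} [NormedAddCommGroup E] [NormedSpace ℝ E] [FiniteDimensional ℝ E]
    [Finite Φ] {R : Set E}
    (w : Φ → E →ᵃ[ℝ] ℝ) (hw : ∀ y ∈ affineSpan ℝ R, (∀ k, 0 ≤ w k y) → y ∈ R) {z : E}
    (hza : z ∈ affineSpan ℝ R) (hz : ∀ k, 0 < w k z) : z ∈ intrinsicInterior ℝ R := by
  rw [mem_intrinsicInterior]
  refine ⟨⟨z, hza⟩, ?_, rfl⟩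
  rw [mem_interior]
  refine ⟨⋂ k, {y : affineSpan ℝ R | 0 < w k y}, ?_, ?_, ?_⟩
  · intro y hy
    rw [Set.mem_iInter] at hy
    exact hw y y.2 fun k => (hy k).le
  · apply isOpen_iInter_of_finite
    intro k
    apply isOpen_lt continuous_const
    exact (AffineMap.continuous_of_finiteDimensional (w k)).comp continuous_subtype_val
  · rw [Set.mem_iInter]; exact hz

theorem affineSpan_smul_mem {E : Type*} [AddCommGroup E] [Module ℝ E] {Q : Set E} {h : ℝ}
    (hh : h ≠ 0) (z : E) : z ∈ affineSpan ℝ (h • Q) ↔ h⁻¹ • z ∈ affineSpan ℝ Q := by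
  have h1 : h • Q = (h • (LinearMap.id : E →ₗ[ℝ] E)).toAffineMap '' Q := by
    ext; simp [Set.mem_smul_set]
  rw [h1, ← AffineSubspace.map_span, AffineSubspace.mem_map]
  constructor
  · rintro ⟨y, hy, rfl⟩
    simpa [smul_smul, inv_mul_cancel₀ hh] using hy
  · intro hz
    exact ⟨_, hz, by simp [smul_smul, inv_mul_cancel₀ hh]⟩

theorem IsLatticePt.add {N : ℕ} {x y : Fin N → ℝ} (hx : IsLatticePt x) (hy : IsLatticePt y) :
    IsLatticePt (x + y) := by
  intro i
  obtain ⟨a, ha⟩ := hx i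
  obtain ⟨b, hb⟩ := hy i
  exact ⟨a + b, by simp [ha, hb]⟩

theorem IsLatticePt.sub {N : ℕ} {x y : Fin N → ℝ} (hx : IsLatticePt x) (hy : IsLatticePt y) :
    IsLatticePt (x - y) := by
  intro i
  obtain ⟨a, ha⟩ := hx i
  obtain ⟨b, hb⟩ := hy i
  exact ⟨a - b, by simp [ha, hb]⟩

theorem IsLatticePt.nsmul {N : ℕ} {x : Fin N → ℝ} (hx : IsLatticePt x) (h : ℕ) :
    IsLatticePt ((h : ℝ) • x) := by
  intro i
  obtain ⟨a, ha⟩ := hx i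
  exact ⟨h * a, by simp [ha]⟩

theorem IsLatticePt.sum {N : ℕ} {ι : Type*} (s : Finset ι) (p : ι → Fin N → ℝ)
    (hp : ∀ i, IsLatticePt (p i)) : IsLatticePt (∑ i ∈ s, p i) := by
  intro j
  choose z hz using fun i => hp i j
  exact ⟨∑ i ∈ s, z i, by simp [hz]⟩

theorem aff_hom {E : Type*} [AddCommGroup E] [Module ℝ E] (u : E →ᵃ[ℝ] ℝ) (y : E) :
    u y = u.linear y + u 0 := by
  have := u.decomp
  conv_lhs => rw [this]
  simp

theorem aff_sub {E : Type*} [AddCommGroup E] [Module ℝ E] (u : E →ᵃ[ℝ] ℝ) (y z : E) :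
    u.linear (y - z) = u y - u z := by
  rw [aff_hom u y, aff_hom u z, map_sub]; ring

theorem hom_int {N : ℕ} {Q : Set (Fin N → ℝ)} (u : (Fin N → ℝ) →ᵃ[ℝ] ℝ)
    (hu : IsIntegralOn Q u) {v : Fin N → ℝ} (hv : v ∈ affineSpan ℝ Q) (hvl : IsLatticePt v)
    (h : ℕ) (hh : 0 < h) {z : Fin N → ℝ} (hz : IsLatticePt z)
    (hza : (h : ℝ)⁻¹ • z ∈ affineSpan ℝ Q) : ∃ m : ℤ, (h : ℝ) * u ((h : ℝ)⁻¹ • z) = m := by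
  have hh' : (h : ℝ) ≠ 0 := by positivity
  set y := (h : ℝ)⁻¹ • z with hy
  have hzy : z = (h : ℝ) • y := by rw [hy, smul_smul, mul_inv_cancel₀ hh', one_smul]
  have hd : z - (h : ℝ) • v ∈ (affineSpan ℝ Q).direction := by
    rw [hzy, ← smul_sub]
    exact Submodule.smul_mem _ _ (AffineSubspace.vsub_mem_direction hza hv)
  have h1 : (z - (h : ℝ) • v) + v ∈ affineSpan ℝ Q := AffineSubspace.vadd_mem_of_mem_direction hd hv
  obtain ⟨a, ha⟩ := hu _ h1 ((hz.sub (hvl.nsmul h)).add hvl)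
  obtain ⟨b, hb⟩ := hu _ hv hvl
  refine ⟨h * b + (a - b), ?_⟩
  push_cast
  rw [← ha, ← hb, hzy, aff_hom u ((h : ℝ) • y - (h : ℝ) • v + v), aff_hom u v, aff_hom u y]
  simp only [map_add, map_sub, map_smul, smul_eq_mul]
  ring

theorem codeg_eq {N : ℕ} {Φ ι : Type*} [Fintype Φ] [Fintype ι] (Q : Set (Fin N → ℝ))
    (hQ : Convex ℝ Q) (u : Φ → (Fin N → ℝ) →ᵃ[ℝ] ℝ) (hint : ∀ k, IsIntegralOn Q (u k))
    (hdesc : ∀ y ∈ affineSpan ℝ Q, (∀ k, 0 ≤ u k y) → y ∈ Q)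
    (hnn : ∀ k, ∀ y ∈ Q, 0 ≤ u k y) (c : Φ → ℝ) (hc : ∀ k, 0 < c k)
    (hcs : ∀ y ∈ affineSpan ℝ Q, ∑ k, c k * u k y = 1)
    (p : ι → Fin N → ℝ) (hpQ : ∀ i, p i ∈ Q) (hpl : ∀ i, IsLatticePt (p i))
    (hpu : ∀ k, ∑ i, u k (p i) = 1) (hι : 0 < Fintype.card ι) :
    polyCodeg Q = Fintype.card ι := by
  classical
  have hι' : (0 : ℝ) < Fintype.card ι := by exact_mod_cast hι
  obtain ⟨i0⟩ := Fintype.card_pos_iff.1 hι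
  let W : ℝ → Φ → (Fin N → ℝ) →ᵃ[ℝ] ℝ := fun h k =>
    (u k).comp (h⁻¹ • (LinearMap.id : (Fin N → ℝ) →ₗ[ℝ] (Fin N → ℝ))).toAffineMap
  have hW : ∀ h k z, W h k z = u k (h⁻¹ • z) := by intro h k z; simp [W]
  have hsub := subset_affineSpan ℝ Q
  unfold polyCodeg
  apply IsLeast.csInf_eq
  constructor
  · refine ⟨hι, fun hhol => ?_⟩
    have hne : (Fintype.card ι : ℝ) ≠ 0 := hι'.ne'
    have hmemQ : (Fintype.card ι : ℝ)⁻¹ • ∑ i, p i ∈ Q := by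
      rw [Finset.smul_sum]
      apply hQ.sum_mem
      · intro i _; positivity
      · simp [hne]
      · intro i _; exact hpQ i
    apply hhol (∑ i, p i) _ (IsLatticePt.sum _ _ hpl)
    apply mem_intr (W (Fintype.card ι))
    · intro y hy hyk
      rw [affineSpan_smul_mem hne] at hy
      rw [Set.mem_smul_set_iff_inv_smul_mem₀ hne]
      exact hdesc _ hy (by simpa only [hW] using hyk)
    · rw [affineSpan_smul_mem hne]
      exact hsub hmemQ
    · intro k
      rw [hW]
      have h1 := hpu k
      simp only [aff_hom (u k) (p _), Finset.sum_add_distrib, Finset.sum_const,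
        Finset.card_univ, nsmul_eq_mul] at h1
      rw [aff_hom, map_smul, map_sum, smul_eq_mul]
      have : (Fintype.card ι : ℝ)⁻¹ * ∑ i, (u k).linear (p i) + (u k) 0 =
        (Fintype.card ι : ℝ)⁻¹ * 1 := by
        rw [← h1]; field_simp
      rw [this]; positivity
  · rintro r' ⟨hr', hnh⟩
    have hr'' : (0 : ℝ) < r' := by exact_mod_cast hr'
    have hne : (r' : ℝ) ≠ 0 := hr''.ne'
    unfold IsHollow at hnh
    push Not at hnh
    obtain ⟨z, hz, hzl⟩ := hnh
    have hzQ := intrinsicInterior_subset hz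
    rw [Set.mem_smul_set_iff_inv_smul_mem₀ hne] at hzQ
    have hge : ∀ k, 1 ≤ (r' : ℝ) * u k ((r' : ℝ)⁻¹ • z) := by
      intro k
      obtain ⟨i, hi⟩ : ∃ i, 0 < u k (p i) := by
        by_contra h
        push Not at h
        have := Finset.sum_nonpos (s := Finset.univ) fun i _ => h i
        rw [hpu k] at this
        linarith
      have h1 : 0 < W r' k z := by
        apply intr_pos (W r' k) (R := (r' : ℝ) • Q) _ (q := (r' : ℝ) • p i) _ _ hz
        · intro y hy
          rw [Set.mem_smul_set_iff_inv_smul_mem₀ hne] at hy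
          rw [hW]; exact hnn k _ hy
        · exact Set.smul_mem_smul_set (hpQ i)
        · rw [hW, smul_smul, inv_mul_cancel₀ hne, one_smul]; exact hi
      rw [hW] at h1
      obtain ⟨m, hm⟩ := hom_int (u k) (hint k) (hsub (hpQ i0)) (hpl i0) r' hr' hzl (hsub hzQ)
      have h2 : 0 < (r' : ℝ) * u k ((r' : ℝ)⁻¹ • z) := mul_pos hr'' h1
      rw [hm] at h2 ⊢
      have : 0 < m := by exact_mod_cast h2
      exact_mod_cast this
    have h3 : (r' : ℝ) = ∑ k, c k * ((r' : ℝ) * u k ((r' : ℝ)⁻¹ • z)) := by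
      have := hcs _ (hsub hzQ)
      calc (r' : ℝ) = r' * ∑ k, c k * u k ((r' : ℝ)⁻¹ • z) := by rw [this, mul_one]
        _ = _ := by rw [Finset.mul_sum]; exact Finset.sum_congr rfl fun k _ => by ring
    have h4 : ∑ k, c k = Fintype.card ι := by
      calc ∑ k, c k = ∑ k, c k * ∑ i, u k (p i) := by
            exact Finset.sum_congr rfl fun k _ => by rw [hpu k, mul_one]
        _ = ∑ i, ∑ k, c k * u k (p i) := by
            rw [Finset.sum_comm]; exact Finset.sum_congr rfl fun k _ => by rw [Finset.mul_sum]
        _ = ∑ i : ι, (1 : ℝ) := Finset.sum_congr rfl fun i _ => hcs _ (hsub (hpQ i))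
        _ = _ := by simp
    have h5 : (Fintype.card ι : ℝ) ≤ r' := by
      rw [h3, ← h4]
      apply Finset.sum_le_sum
      intro k _
      have := hge k
      have := hc k
      nlinarith
    exact_mod_cast h5

theorem facet_lemma {N : ℕ} (R : Set (Fin N → ℝ)) (x : Fin N → ℝ) (hx : x ∈ affineSpan ℝ R)
    (f : (Fin N → ℝ) →ₗ[ℝ] ℝ) (hle : ∀ z ∈ R, f (z - x) ≤ 1)
    (hspan : ∀ d ∈ (affineSpan ℝ R).direction, d ∈ Submodule.span ℝ {d | x + d ∈ R ∧ f d = 1})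
    (hne : ∃ z ∈ R, f (z - x) = 1) :
    IsFacet R {z | z ∈ R ∧ f (z - x) = 1} := by
  obtain ⟨z0, hz0, hfz0⟩ := hne
  have hsub := subset_affineSpan ℝ R
  set D := (affineSpan ℝ R).direction with hD
  have hdir : ∀ z ∈ R, z - x ∈ D := fun z hz => AffineSubspace.vsub_mem_direction (hsub hz) hx
  refine ⟨?_, ⟨z0, hz0, hfz0⟩, ?_⟩
  · intro _
    refine ⟨LinearMap.toContinuousLinearMap f, ?_⟩
    ext z
    simp only [Set.mem_ofPred_eq, LinearMap.coe_toContinuousLinearMap']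
    constructor
    · rintro ⟨hz, hfz⟩
      refine ⟨hz, fun y hy => ?_⟩
      have := hle y hy
      rw [map_sub] at this hfz
      linarith
    · rintro ⟨hz, hmax⟩
      refine ⟨hz, le_antisymm (hle z hz) ?_⟩
      have := hmax z0 hz0
      rw [map_sub] at hfz0 ⊢
      linarith
  · unfold polyDim
    rw [← hD]
    let g : D →ₗ[ℝ] ℝ := f.domRestrict D
    have h1 := g.finrank_range_add_finrank_ker
    have hr : LinearMap.range g = ⊤ := by
      apply LinearMap.range_eq_top.2
      intro t
      refine ⟨t • ⟨z0 - x, hdir z0 hz0⟩, ?_⟩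
      rw [map_smul]
      change t • f (z0 - x) = t
      rw [hfz0]; simp
    rw [hr, finrank_top, Module.finrank_self] at h1
    have hK : (affineSpan ℝ {z | z ∈ R ∧ f (z - x) = 1}).direction =
        (LinearMap.ker g).map D.subtype := by
      rw [direction_affineSpan]
      apply le_antisymm
      · rw [vectorSpan_def, Submodule.span_le]
        rintro _ ⟨a, ⟨ha, hfa⟩, b, ⟨hb, hfb⟩, rfl⟩
        have hd : a - b ∈ D := AffineSubspace.vsub_mem_direction (hsub ha) (hsub hb)
        refine ⟨⟨a - b, hd⟩, ?_, rfl⟩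
        change f (a - b) = 0
        rw [map_sub] at hfa hfb ⊢
        linarith
      · rintro _ ⟨⟨d, hd⟩, hgd, rfl⟩
        have hfd : f d = 0 := hgd
        set K := vectorSpan ℝ {z | z ∈ R ∧ f (z - x) = 1} with hK
        have key : ∀ d ∈ Submodule.span ℝ {d | x + d ∈ R ∧ f d = 1},
            d - f d • (z0 - x) ∈ K := by
          intro d hd
          induction hd using Submodule.span_induction with
          | mem e he =>
            obtain ⟨he1, he2⟩ := he
            rw [he2, one_smul]
            have : e - (z0 - x) = (x + e) -ᵥ z0 := by rw [vsub_eq_sub]; abel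
            rw [this]
            apply vsub_mem_vectorSpan
            · exact ⟨he1, by rw [add_sub_cancel_left]; exact he2⟩
            · exact ⟨hz0, hfz0⟩
          | zero => simp
          | add a b _ _ ha hb =>
            have := K.add_mem ha hb
            convert this using 1
            rw [map_add, add_smul]; abel
          | smul t a _ ha =>
            have := K.smul_mem t ha
            convert this using 1
            rw [map_smul, smul_eq_mul, mul_smul, ← smul_sub]
        have := key d (hspan d hd)
        rw [hfd, zero_smul, sub_zero] at this
        exact this
    rw [hK, Submodule.finrank_map_subtype_eq]
    omega

theorem gor_data {N : ℕ} (P : Set (Fin N → ℝ)) (hP : IsLatticePolytope P) (hIDP : IsIDP P)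
    (r : ℕ) (hr : 0 < r) (href : IsReflexivePolytope ((r : ℝ) • P)) (hdim : 0 < polyDim P) :
    ∃ (Φ : Type) (_ : Fintype Φ) (u : Φ → (Fin N → ℝ) →ᵃ[ℝ] ℝ) (c : Φ → ℝ)
      (p : Fin r → Fin N → ℝ), (∀ k, IsIntegralOn P (u k)) ∧
      (∀ y ∈ affineSpan ℝ P, (∀ k, 0 ≤ u k y) → y ∈ P) ∧ (∀ k, ∀ y ∈ P, 0 ≤ u k y) ∧
      (∀ k, 0 < c k) ∧ (∀ y ∈ affineSpan ℝ P, ∑ k, c k * u k y = 1) ∧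
      (∀ i, p i ∈ P) ∧ (∀ i, IsLatticePt (p i)) ∧ (∀ k, ∑ i, u k (p i) = 1) := by
  classical
  obtain ⟨V, hVne, hVl, hPV⟩ := hP
  obtain ⟨x, hxint, hxl, hfac⟩ := href
  have hr0 : (0 : ℝ) < r := by exact_mod_cast hr
  have hrne : (r : ℝ) ≠ 0 := hr0.ne'
  set R : Set (Fin N → ℝ) := (r : ℝ) • P with hR
  have hsub := subset_affineSpan ℝ R
  have hxR : x ∈ R := intrinsicInterior_subset hxint
  have hxa := hsub hxR
  set D := (affineSpan ℝ R).direction with hD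
  have hVP : ∀ v ∈ V, v ∈ P := fun v hv => by rw [hPV]; exact subset_convexHull ℝ _ hv
  have hsmulaff : ∀ y ∈ affineSpan ℝ P, (r : ℝ) • y ∈ affineSpan ℝ R := by
    intro y hy
    rw [hR, affineSpan_smul_mem hrne, smul_smul, inv_mul_cancel₀ hrne, one_smul]; exact hy
  have hdirP : ∀ y ∈ affineSpan ℝ P, ∀ z ∈ affineSpan ℝ P, y - z ∈ D := by
    intro y hy z hz
    have h1 : (r : ℝ) • (y - z) ∈ D := by
      rw [smul_sub]
      exact AffineSubspace.vsub_mem_direction (hsmulaff y hy) (hsmulaff z hz)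
    exact (D.smul_mem_iff hrne).1 h1
  have hDx : ∀ y ∈ affineSpan ℝ P, (r : ℝ) • y - x ∈ D := fun y hy =>
    AffineSubspace.vsub_mem_direction (hsmulaff y hy) hxa
  have hsubP := subset_affineSpan ℝ P
  let w : V → D := fun v => ⟨(r : ℝ) • (v : Fin N → ℝ) - x, hDx _ (hsubP (hVP v v.2))⟩
  have hRconv : ∀ d : D, x + (d : Fin N → ℝ) ∈ R ↔ d ∈ convexHull ℝ (Set.range w) := by
    intro d
    let A : (Fin N → ℝ) →ᵃ[ℝ] (Fin N → ℝ) :=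
      ((r : ℝ) • (LinearMap.id : (Fin N → ℝ) →ₗ[ℝ] (Fin N → ℝ))).toAffineMap -
        AffineMap.const ℝ _ x
    have hA : ∀ y, A y = (r : ℝ) • y - x := fun y => by simp [A]
    have h1 : D.subtype '' (convexHull ℝ (Set.range w)) = A '' P := by
      rw [LinearMap.image_convexHull, hPV, AffineMap.image_convexHull]
      congr 1
      ext z
      simp only [Set.mem_image, Set.mem_range, exists_exists_eq_and, hA, Submodule.subtype_apply]
      constructor
      · rintro ⟨v, rfl⟩; exact ⟨v, v.2, rfl⟩
      · rintro ⟨v, hv, rfl⟩; exact ⟨⟨v, hv⟩, rfl⟩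
    have h2 : d ∈ convexHull ℝ (Set.range w) ↔ (d : Fin N → ℝ) ∈ A '' P := by
      rw [← h1]
      constructor
      · intro h; exact ⟨d, h, rfl⟩
      · rintro ⟨e, he, hed⟩
        have : e = d := Subtype.ext hed
        exact this ▸ he
    rw [h2]
    constructor
    · rintro ⟨y, hy, hyd⟩
      refine ⟨y, hy, ?_⟩
      rw [hA]
      have hyd' : (r : ℝ) • y = x + d := hyd
      rw [hyd', add_sub_cancel_left]
    · rintro ⟨y, hy, hyd⟩
      refine ⟨y, hy, ?_⟩
      rw [hA] at hyd
      change (r : ℝ) • y = x + d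
      rw [← hyd, add_sub_cancel]
  have h0 : (0 : D) ∈ interior (convexHull ℝ (Set.range w)) := by
    obtain ⟨y, hy, hyx⟩ := mem_intrinsicInterior.1 hxint
    let γ : D → affineSpan ℝ R := fun d =>
      ⟨(d : Fin N → ℝ) + x, AffineSubspace.vadd_mem_of_mem_direction d.2 hxa⟩
    have hγ : Continuous γ := by
      apply Continuous.subtype_mk
      exact continuous_subtype_val.add continuous_const
    rw [mem_interior]
    refine ⟨γ ⁻¹' interior ((↑) ⁻¹' R : Set (affineSpan ℝ R)), ?_,
      isOpen_interior.preimage hγ, ?_⟩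
    · intro d hd
      have h5 : γ d ∈ ((↑) ⁻¹' R : Set (affineSpan ℝ R)) := interior_subset hd
      have h6 : (d : Fin N → ℝ) + x ∈ R := h5
      rw [← hRconv, add_comm]; exact h6
    · have : γ 0 = y := by ext1; simp [γ, hyx]
      rw [Set.mem_preimage, this]; exact hy
  have hDP : (affineSpan ℝ P).direction ≤ D := by
    rw [direction_affineSpan, vectorSpan_def, Submodule.span_le]
    rintro _ ⟨a, ha, b, hb, rfl⟩
    exact hdirP a (hsubP ha) b (hsubP hb)
  have hDpos : 0 < Module.finrank ℝ D := lt_of_lt_of_le hdim (Submodule.finrank_mono hDP)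
  haveI hDnt : Nontrivial D := Module.finrank_pos_iff.1 hDpos
  obtain ⟨Φ, hΦ1, hΦ2, hΦ3, c, hc0, hcs⟩ := polar_lemma w h0
  have hΦne : Φ.Nonempty := by
    by_contra h
    rw [Finset.not_nonempty_iff_eq_empty] at h
    have : convexHull ℝ (Set.range w) = Set.univ := by
      ext y; simp only [Set.mem_univ, iff_true]
      exact hΦ3 y (by simp [h])
    have hcomp := Set.Finite.isCompact_convexHull (𝕜 := ℝ) (Set.finite_range w)
    rw [this] at hcomp
    haveI := NormedSpace.noncompactSpace ℝ D
    exact noncompact_univ D hcomp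
  have hfle : ∀ f ∈ Φ, ∀ d ∈ convexHull ℝ (Set.range w), f d ≤ 1 := by
    intro f hf d hd
    have : convexHull ℝ (Set.range w) ⊆ {x | f x ≤ 1} := by
      apply convexHull_min
      · rintro _ ⟨i, rfl⟩; exact hΦ1 f hf i
      · exact convex_halfSpace_le f.toLinearMap.isLinear 1
    exact this hd
  have htight : ∀ f ∈ Φ, ∃ v : V, f (w v) = 1 := by
    intro f hf
    by_contra h
    push Not at h
    have h2 := hΦ2 f hf
    have : {x | ∃ i, x = w i ∧ f (w i) = 1} = (∅ : Set D) := by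
      ext z; simp only [Set.mem_ofPred_eq, Set.mem_empty_iff_false, iff_false]
      rintro ⟨i, -, hi⟩; exact h i hi
    rw [this, Submodule.span_empty] at h2
    exact bot_ne_top h2
  have hU : ∀ f ∈ Φ, ∃ U : (Fin N → ℝ) →ᵃ[ℝ] ℝ, IsIntegralOn R U ∧
      ∀ d : D, U.linear d = f d := by
    intro f hf
    obtain ⟨F, hF⟩ := LinearMap.exists_extend f.toLinearMap
    have hF' : ∀ d : D, F d = f d := fun d => by
      have := congrArg (fun g : D →ₗ[ℝ] ℝ => g d) hF
      exact this
    obtain ⟨v0, hv0⟩ := htight f hf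
    have hwR : ∀ v : V, x + (w v : Fin N → ℝ) ∈ R := by
      intro v; rw [hRconv]; exact subset_convexHull ℝ _ ⟨v, rfl⟩
    have hFac : IsFacet R {z | z ∈ R ∧ F (z - x) = 1} := by
      refine facet_lemma R x hxa F ?_ ?_ ?_
      · intro z hz
        have hd : z - x ∈ D := AffineSubspace.vsub_mem_direction (hsub hz) hxa
        rw [hF' ⟨z - x, hd⟩]
        apply hfle f hf
        rw [← hRconv]
        simpa using hz
      · intro d hd
        have h1 : (⟨d, hd⟩ : D) ∈ Submodule.span ℝ {x | ∃ i, x = w i ∧ f (w i) = 1} := by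
          rw [hΦ2 f hf]; trivial
        have h2 := Submodule.mem_map_of_mem (f := D.subtype) h1
        rw [Submodule.map_span] at h2
        refine Submodule.span_mono ?_ h2
        rintro _ ⟨_, ⟨v, rfl, hv⟩, rfl⟩
        exact ⟨hwR v, by rw [Submodule.subtype_apply, hF', hv]⟩
      · exact ⟨_, hwR v0, by rw [add_sub_cancel_left, hF', hv0]⟩
    obtain ⟨U, hUint, hUF⟩ := hfac _ hFac
    refine ⟨U, hUint, ?_⟩
    have hle : Submodule.span ℝ {x | ∃ i, x = w i ∧ f (w i) = 1} ≤
        LinearMap.ker (U.linear.domRestrict D - f.toLinearMap) := by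
      rw [Submodule.span_le]
      rintro _ ⟨v, rfl, hv⟩
      change U.linear (w v) - f (w v) = 0
      have h1 := hUF (x + w v) ⟨hwR v, by rw [add_sub_cancel_left, hF', hv]⟩
      have h2 := aff_sub U (x + w v) x
      rw [add_sub_cancel_left] at h2
      rw [h2, h1, hv]; ring
    rw [hΦ2 f hf] at hle
    intro d
    have : U.linear d - f d = 0 := hle (Submodule.mem_top (x := d))
    linarith
  choose! U hUint hUf using hU
  haveI : Nonempty V := ⟨⟨hVne.choose, hVne.choose_spec⟩⟩
  choose! t ht using htight
  let u : Φ → (Fin N → ℝ) →ᵃ[ℝ] ℝ := fun k =>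
    AffineMap.const ℝ _ ((U k).linear (t k)) - (U k).linear.toAffineMap
  have hu : ∀ k y, u k y = (U k).linear ((t k : Fin N → ℝ) - y) := by
    intro k y; simp [u, map_sub]
  have htP : ∀ k : Φ, ((t k : V) : Fin N → ℝ) ∈ P := fun k => hVP _ (t k).2
  have hru : ∀ (k : Φ) (y) (hy : y ∈ affineSpan ℝ P),
      (r : ℝ) * u k y = 1 - (k : D →L[ℝ] ℝ) ⟨(r : ℝ) • y - x, hDx y hy⟩ := by
    intro k y hy
    rw [hu, ← smul_eq_mul, ← map_smul]
    have h1 : (r : ℝ) • ((t k : Fin N → ℝ) - y) = (w (t k) : Fin N → ℝ) - ((r : ℝ) • y - x) := by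
      simp only [w, smul_sub]; abel
    rw [h1, map_sub, hUf k k.2, ht k k.2, ← hUf k k.2]
  have hp : ∃ p : Fin r → (Fin N → ℝ), (∀ i, p i ∈ P ∧ IsLatticePt (p i)) ∧ x = ∑ i, p i := by
    by_cases h2 : 2 ≤ r
    · exact hIDP r h2 x hxl hxR
    · have : r = 1 := by omega
      subst this
      refine ⟨fun _ => x, fun _ => ⟨?_, hxl⟩, by simp⟩
      simpa [hR] using hxR
  obtain ⟨p, hp, hxp⟩ := hp
  have hcpos : 0 < ∑ f ∈ Φ, c f := Finset.sum_pos hc0 hΦne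
  refine ⟨Φ, inferInstance, u, fun k => c k * r / ∑ f ∈ Φ, c f, p, ?_, ?_, ?_, ?_, ?_,
    fun i => (hp i).1, fun i => (hp i).2, ?_⟩
  · intro k y hy hyl
    have hd := hdirP _ (hsubP (htP k)) y hy
    have h1 : ((t k : Fin N → ℝ) - y) + x ∈ affineSpan ℝ R :=
      AffineSubspace.vadd_mem_of_mem_direction hd hxa
    obtain ⟨a, ha⟩ := hUint k k.2 _ h1 (((hVl _ (t k).2).sub hyl).add hxl)
    obtain ⟨b, hb⟩ := hUint k k.2 _ hxa hxl
    refine ⟨a - b, ?_⟩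
    have h2 := aff_sub (U k) (((t k : Fin N → ℝ) - y) + x) x
    rw [add_sub_cancel_right] at h2
    rw [hu, h2, ha, hb]; push_cast; ring
  · intro y hy hyk
    have h1 : (⟨(r : ℝ) • y - x, hDx y hy⟩ : D) ∈ convexHull ℝ (Set.range w) := by
      apply hΦ3
      intro f hf
      have h2 := hru ⟨f, hf⟩ y hy
      have h3 := mul_nonneg hr0.le (hyk ⟨f, hf⟩)
      rw [h2] at h3
      simp only at h3
      linarith
    rw [← hRconv, add_sub_cancel, hR, Set.smul_mem_smul_set_iff₀ hrne] at h1
    exact h1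
  · intro k y hy
    have h2 := hru k y (hsubP hy)
    have h3 : (k : D →L[ℝ] ℝ) ⟨(r : ℝ) • y - x, hDx y (hsubP hy)⟩ ≤ 1 := by
      apply hfle k k.2
      rw [← hRconv, add_sub_cancel]
      exact Set.smul_mem_smul_set hy
    have h4 : 0 ≤ (r : ℝ) * u k y := by rw [h2]; linarith
    exact nonneg_of_mul_nonneg_right h4 hr0
  · intro k
    have := hc0 k k.2
    positivity
  · intro y hy
    have h1 : ∀ k : Φ, c k * r / (∑ f ∈ Φ, c f) * u k y =
        (c k - c k * (k : D →L[ℝ] ℝ) ⟨(r : ℝ) • y - x, hDx y hy⟩) / (∑ f ∈ Φ, c f) := by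
      intro k
      rw [div_mul_eq_mul_div, mul_assoc, hru k y hy]; ring
    rw [Finset.sum_congr rfl fun k _ => h1 k, ← Finset.sum_div, Finset.sum_sub_distrib]
    have h2 : ∑ k : Φ, c k * (k : D →L[ℝ] ℝ) ⟨(r : ℝ) • y - x, hDx y hy⟩ = 0 := by
      have := congrArg (fun f : D →L[ℝ] ℝ => f ⟨(r : ℝ) • y - x, hDx y hy⟩) hcs
      rw [← Finset.sum_coe_sort] at this
      simpa [sum_apply] using this
    rw [h2, sub_zero, Finset.sum_coe_sort Φ c, div_self hcpos.ne']
  · intro k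
    simp only [hu]
    rw [← map_sum, Finset.sum_sub_distrib, ← hxp]
    have h1 : ∑ i : Fin r, (t k : Fin N → ℝ) - x = (w (t k) : Fin N → ℝ) := by
      simp [w, ← Nat.cast_smul_eq_nsmul ℝ]
    rw [h1, hUf k k.2, ht k k.2]

theorem aff_eq_on_span {N : ℕ} {F : Set (Fin N → ℝ)} (l : (Fin N → ℝ) →ᵃ[ℝ] ℝ) (t : ℝ)
    (h : ∀ y ∈ F, l y = t) : ∀ y ∈ affineSpan ℝ F, l y = t := by
  intro y hy
  have h1 : l y ∈ (affineSpan ℝ F).map l := AffineSubspace.mem_map_of_mem l hy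
  rw [AffineSubspace.map_span] at h1
  have h2 : l '' F ⊆ {t} := by rintro _ ⟨z, hz, rfl⟩; exact h z hz
  have h3 := affineSpan_mono ℝ h2 h1
  simpa using h3

theorem aff_lin_zero {N : ℕ} {F : Set (Fin N → ℝ)} (l : (Fin N → ℝ) →ᵃ[ℝ] ℝ) (t : ℝ)
    (h : ∀ y ∈ F, l y = t) : ∀ y ∈ (affineSpan ℝ F).direction, l.linear y = 0 := by
  intro y hy
  rw [direction_affineSpan, vectorSpan_def] at hy
  have : Submodule.span ℝ (F -ᵥ F) ≤ LinearMap.ker l.linear := by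
    rw [Submodule.span_le]
    rintro _ ⟨a, ha, b, hb, rfl⟩
    change l.linear (a - b) = 0
    rw [aff_sub, h a ha, h b hb, sub_self]
  exact this hy

theorem join_split {N : ℕ} {F G : Set (Fin N → ℝ)} (hF : Convex ℝ F) (hG : Convex ℝ G)
    (hFn : F.Nonempty) (hGn : G.Nonempty) (l : (Fin N → ℝ) →ᵃ[ℝ] ℝ)
    (h0 : ∀ y ∈ F, l y = 0) (h1 : ∀ y ∈ G, l y = 1) (y : Fin N → ℝ)
    (hy : y ∈ convexHull ℝ (F ∪ G)) :
    ∃ a ∈ F, ∃ b ∈ G, 0 ≤ l y ∧ l y ≤ 1 ∧ y = (1 - l y) • a + l y • b := by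
  rw [convexHull_union hFn hGn, hF.convexHull_eq, hG.convexHull_eq, mem_convexJoin] at hy
  obtain ⟨a, ha, b, hb, s, t, hs, ht, hst, rfl⟩ := hy
  have : l (s • a + t • b) = t := by
    have := Convex.combo_affine_apply (f := l) (x := a) (y := b) hst
    rw [this, h0 a ha, h1 b hb]; simp
  refine ⟨a, ha, b, hb, ?_, ?_, ?_⟩ <;> rw [this]
  · exact ht
  · linarith
  · rw [← hst]; simp

theorem iso_lemma {N : ℕ} {F G P : Set (Fin N → ℝ)} (hP : P = convexHull ℝ (F ∪ G))
    (l : (Fin N → ℝ) →ᵃ[ℝ] ℝ)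
    (h0 : ∀ y ∈ F, l y = 0) (h1 : ∀ y ∈ G, l y = 1) (hint : IsIntegralOn P l) :
    LatticeIso P (cayleyTwo F G) := by
  let f : (Fin N → ℝ) →ᵃ[ℝ] (Fin (N + 2) → ℝ) := AffineMap.pi (fun j =>
    Fin.addCases (motive := fun _ => (Fin N → ℝ) →ᵃ[ℝ] ℝ)
      (fun i => (LinearMap.proj i : (Fin N → ℝ) →ₗ[ℝ] ℝ).toAffineMap)
      (fun i => ![AffineMap.const ℝ _ 1 - l, l] i) j)
  let g : (Fin (N + 2) → ℝ) →ᵃ[ℝ] (Fin N → ℝ) :=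
    (LinearMap.funLeft ℝ ℝ (Fin.castAdd 2)).toAffineMap
  have hf : ∀ y, f y = Fin.append y ![1 - l y, l y] := by
    intro y
    ext j
    induction j using Fin.addCases with
    | left i => simp [f]
    | right i => fin_cases i <;> simp [f]
  have hg : ∀ y i, g y i = y (Fin.castAdd 2 i) := fun y i => rfl
  have hgf : ∀ y, g (f y) = y := by
    intro y; ext i; rw [hg, hf, Fin.append_left]
  have hfP : f '' P = cayleyTwo F G := by
    rw [hP, AffineMap.image_convexHull, Set.image_union, cayleyTwo]
    congr 2
    · apply Set.image_congr
      intro y hy; rw [hf, h0 y hy, sub_zero]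
    · apply Set.image_congr
      intro y hy; rw [hf, h1 y hy, sub_self]
  refine ⟨f, g, hfP, ?_, fun x _ => hgf x, ?_, ?_, ?_⟩
  · rw [← hfP, ← Set.image_comp]
    have : ⇑g ∘ ⇑f = id := by ext1 y; exact hgf y
    rw [this, Set.image_id]
  · intro y hy
    rw [← hfP, ← AffineSubspace.map_span] at hy
    obtain ⟨z, _, rfl⟩ := hy
    rw [hgf]
  · intro x hx hxl j
    rw [hf]
    obtain ⟨m, hm⟩ := hint x hx hxl
    induction j using Fin.addCases with
    | left i => rw [Fin.append_left]; exact hxl i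
    | right i =>
      rw [Fin.append_right]
      fin_cases i
      · exact ⟨1 - m, by simp [hm]⟩
      · exact ⟨m, by simp [hm]⟩
  · intro y _ hyl i
    exact hyl _

theorem dim_lemma {N : ℕ} {F G P : Set (Fin N → ℝ)} (hP : P = convexHull ℝ (F ∪ G))
    (hFn : F.Nonempty) (hGn : G.Nonempty)
    (l : (Fin N → ℝ) →ᵃ[ℝ] ℝ)
    (h0 : ∀ y ∈ F, l y = 0) (h1 : ∀ y ∈ G, l y = 1)
    (hdis : ∀ y ∈ (affineSpan ℝ F).direction, y ∈ (affineSpan ℝ G).direction → y = 0) :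
    polyDim F + polyDim G + 1 = polyDim P := by
  obtain ⟨a, ha⟩ := hFn
  obtain ⟨b, hb⟩ := hGn
  have haF := subset_affineSpan ℝ F ha
  have hbG := subset_affineSpan ℝ G hb
  have hl0 := aff_lin_zero l 0 h0
  have hl1 := aff_lin_zero l 1 h1
  unfold polyDim
  rw [hP, affineSpan_convexHull, AffineSubspace.span_union, AffineSubspace.direction_sup haF hbG]
  have hdj : (affineSpan ℝ F).direction ⊓ (affineSpan ℝ G).direction = ⊥ := by
    rw [eq_bot_iff]
    rintro y ⟨hy1, hy2⟩
    exact hdis y hy1 hy2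
  have hs := Submodule.finrank_sup_add_finrank_inf_eq (affineSpan ℝ F).direction
    (affineSpan ℝ G).direction
  rw [hdj, finrank_bot, add_zero] at hs
  have hlab : l.linear (b - a) = 1 := by rw [aff_sub, h0 a ha, h1 b hb, sub_zero]
  have hs2 := Submodule.finrank_sup_add_finrank_inf_eq
    ((affineSpan ℝ F).direction ⊔ (affineSpan ℝ G).direction) (Submodule.span ℝ {b -ᵥ a})
  have hdj2 : ((affineSpan ℝ F).direction ⊔ (affineSpan ℝ G).direction) ⊓
      (Submodule.span ℝ {b -ᵥ a}) = ⊥ := by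
    rw [eq_bot_iff]
    rintro y ⟨hy1, hy2⟩
    obtain ⟨t, rfl⟩ := Submodule.mem_span_singleton.1 hy2
    have hle : (affineSpan ℝ F).direction ⊔ (affineSpan ℝ G).direction ≤
        LinearMap.ker l.linear := sup_le hl0 hl1
    have h3 : l.linear (t • (b - a)) = 0 := hle hy1
    rw [map_smul, hlab, smul_eq_mul, mul_one] at h3
    rw [h3]; simp
  have hne : b -ᵥ a ≠ 0 := by
    intro h
    rw [vsub_eq_sub] at h
    rw [h, map_zero] at hlab
    exact zero_ne_one hlab
  rw [hdj2, finrank_bot, add_zero, finrank_span_singleton hne] at hs2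
  rw [hs2, hs]

theorem face_codeg {N r : ℕ} {P F : Set (Fin N → ℝ)} {Φ : Type} [Fintype Φ]
    (u : Φ → (Fin N → ℝ) →ᵃ[ℝ] ℝ) (c : Φ → ℝ) (p : Fin r → Fin N → ℝ) (κ : Φ → Fin r)
    (hint : ∀ k, IsIntegralOn P (u k))
    (hdesc : ∀ y ∈ affineSpan ℝ P, (∀ k, 0 ≤ u k y) → y ∈ P)
    (hnn : ∀ k, ∀ y ∈ P, 0 ≤ u k y) (hc : ∀ k, 0 < c k)
    (hcs : ∀ y ∈ affineSpan ℝ P, ∑ k, c k * u k y = 1)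
    (hpP : ∀ i, p i ∈ P) (hpl : ∀ i, IsLatticePt (p i))
    (hpu : ∀ k i, u k (p i) = if κ k = i then 1 else 0)
    (J : Finset (Fin r)) (hJ : J.Nonempty) (hF : Convex ℝ F) (hFP : F ⊆ P)
    (hF0 : ∀ y ∈ F, ∀ k, κ k ∉ J → u k y = 0)
    (hFd : ∀ y ∈ P, (∀ k, κ k ∉ J → u k y = 0) → y ∈ F) :
    polyCodeg F = J.card := by
  classical
  have hspan : affineSpan ℝ F ≤ affineSpan ℝ P := affineSpan_mono ℝ hFP
  have hF0' : ∀ y ∈ affineSpan ℝ F, ∀ k, κ k ∉ J → u k y = 0 := fun y hy k hk =>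
    aff_eq_on_span (u k) 0 (fun z hz => hF0 z hz k hk) y hy
  have key := codeg_eq (Φ := {k // κ k ∈ J}) (ι := {i // i ∈ J}) F hF (fun k => u k)
    (fun k y hy hyl => hint k y (hspan hy) hyl) ?_ (fun k y hy => hnn k y (hFP hy))
    (fun k => c k) (fun k => hc k) ?_ (fun i => p i) ?_ (fun i => hpl i) ?_ ?_
  · rw [key]; simp
  · intro y hy h
    refine hFd y (hdesc y (hspan hy) ?_) (hF0' y hy)
    intro k
    by_cases hk : κ k ∈ J
    · exact h ⟨k, hk⟩
    · rw [hF0' y hy k hk]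
  · intro y hy
    rw [← hcs y (hspan hy)]
    rw [← Finset.sum_filter_add_sum_filter_not Finset.univ (fun k => κ k ∈ J)]
    rw [Finset.sum_eq_zero (s := Finset.univ.filter (fun k => ¬ κ k ∈ J))
      (fun k hk => by rw [hF0' y hy k (Finset.mem_filter.1 hk).2, mul_zero]), add_zero]
    exact (Finset.sum_subtype _ (by simp) (fun k => c k * u k y)).symm
  · intro i
    refine hFd _ (hpP i) ?_
    intro k hk
    rw [hpu, if_neg]
    rintro h; rw [h] at hk; exact hk i.2
  · intro k
    simp only [hpu]
    rw [Finset.sum_eq_single ⟨κ k, k.2⟩]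
    · simp
    · intro b _ hb
      rw [if_neg]
      intro h; exact hb (Subtype.ext h.symm)
    · simp
  · simpa using hJ

theorem kappa_ex {r : ℕ} (a : Fin r → ℝ) (h0 : ∀ i, 0 ≤ a i) (hz : ∀ i, ∃ z : ℤ, a i = z)
    (hs : ∑ i, a i = 1) : ∃ j, ∀ i, a i = if j = i then 1 else 0 := by
  have : ∃ j, 0 < a j := by
    by_contra h
    push Not at h
    have : ∑ i, a i = 0 := Finset.sum_eq_zero fun i _ => le_antisymm (h i) (h0 i)
    linarith
  obtain ⟨j, hj⟩ := this
  have h1 : 1 ≤ a j := by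
    obtain ⟨z, hzz⟩ := hz j
    rw [hzz] at hj ⊢
    have : 0 < z := by exact_mod_cast hj
    exact_mod_cast this
  have h2 := Finset.add_sum_erase Finset.univ a (Finset.mem_univ j)
  have h3 : 0 ≤ ∑ i ∈ Finset.univ.erase j, a i := Finset.sum_nonneg fun i _ => h0 i
  have h4 : ∑ i ∈ Finset.univ.erase j, a i = 0 := by linarith
  rw [Finset.sum_eq_zero_iff_of_nonneg (fun i _ => h0 i)] at h4
  refine ⟨j, fun i => ?_⟩
  split_ifs with h
  · subst h; linarith
  · exact h4 i (Finset.mem_erase.2 ⟨fun e => h e.symm, Finset.mem_univ _⟩)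

theorem lin_inj {N : ℕ} {P : Set (Fin N → ℝ)} (hPb : Bornology.IsBounded P) {Φ : Type}
    (u : Φ → (Fin N → ℝ) →ᵃ[ℝ] ℝ)
    (hdesc : ∀ y ∈ affineSpan ℝ P, (∀ k, 0 ≤ u k y) → y ∈ P)
    (hnn : ∀ k, ∀ y ∈ P, 0 ≤ u k y) (y0 : Fin N → ℝ) (hy0 : y0 ∈ P) (w : Fin N → ℝ)
    (hw : w ∈ (affineSpan ℝ P).direction) (hw0 : ∀ k, (u k).linear w = 0) : w = 0 := by
  by_contra hne
  have hpos : 0 < ‖w‖ := norm_pos_iff.2 hne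
  obtain ⟨C, hC⟩ := hPb.exists_norm_le
  have hall : ∀ t : ℝ, t • w + y0 ∈ P := by
    intro t
    apply hdesc
    · exact AffineSubspace.vadd_mem_of_mem_direction (Submodule.smul_mem _ t hw)
        (subset_affineSpan ℝ P hy0)
    · intro k
      have h1 := aff_sub (u k) (t • w + y0) y0
      rw [add_sub_cancel_right, map_smul, hw0, smul_zero] at h1
      have := hnn k y0 hy0
      linarith
  have hC0 := (norm_nonneg y0).trans (hC y0 hy0)
  have h1 := hC _ (hall ((C + C + 1) / ‖w‖))
  have h2 : ‖((C + C + 1) / ‖w‖) • w‖ = C + C + 1 := by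
    rw [norm_smul, norm_div, norm_norm, div_mul_cancel₀ _ hpos.ne', Real.norm_eq_abs, abs_of_pos]
    linarith
  have h3 := norm_sub_le (((C + C + 1) / ‖w‖) • w + y0) y0
  rw [add_sub_cancel_right, h2] at h3
  have := hC y0 hy0
  linarith

theorem stmt4_aux {N d s : ℕ} (P : Set (Fin N → ℝ))
    (hP : IsLatticePolytope P) (hGor : IsGorenstein P) (hIDP : IsIDP P)
    (hd : polyDim P = d) (hs : polyDeg P = s) (h : 2 * s < d) :
    IsReducible P := by
  classical
  obtain ⟨r, hr, href⟩ := hGor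
  obtain ⟨Φ, _, u, c, p, hint, hdesc, hnn, hc, hcs, hpP, hpl, hpu⟩ :=
    gor_data P hP hIDP r hr href (by omega)
  obtain ⟨V, hVne, hVl, hPV⟩ := hP
  have hPconv : Convex ℝ P := by rw [hPV]; exact convex_convexHull ℝ _
  have hPb : Bornology.IsBounded P := by
    rw [hPV]; exact (Set.Finite.isCompact_convexHull (𝕜 := ℝ) V.finite_toSet).isBounded
  have hcod : polyCodeg P = r := by
    rw [codeg_eq P hPconv u hint hdesc hnn c hc hcs p hpP hpl hpu (by simpa using hr)]; simp
  have hsub := subset_affineSpan ℝ P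
  have hκ : ∀ k, ∃ j, ∀ i, u k (p i) = if j = i then 1 else 0 := fun k =>
    kappa_ex (fun i => u k (p i)) (fun i => hnn k _ (hpP i))
      (fun i => hint k _ (hsub (hpP i)) (hpl i)) (hpu k)
  choose κ hκ using hκ
  set y0 := p ⟨0, hr⟩ with hy0d
  have hy0 : y0 ∈ P := hpP _
  let û : (Fin N → ℝ) →ᵃ[ℝ] (Φ → ℝ) := AffineMap.pi u
  have hû : ∀ y k, û y k = u k y := fun y k => rfl
  have hûl : ∀ y k, û.linear y k = (u k).linear y := fun y k => rfl
  let D := (affineSpan ℝ P).direction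
  let S : Submodule ℝ (Φ → ℝ) := Submodule.span ℝ {û y0} ⊔ D.map û.linear
  have hSr : Module.finrank ℝ S + 2 ≤ 2 * r := by
    have h1 := Submodule.finrank_add_le_finrank_add_finrank (Submodule.span ℝ {û y0})
      (D.map û.linear)
    have h2 := finrank_span_le_card (R := ℝ) ({û y0} : Set (Φ → ℝ))
    simp only [Set.toFinset_singleton, Finset.card_singleton] at h2
    have h3 := Submodule.finrank_map_le û.linear D
    have h4 : Module.finrank ℝ D = d := hd
    have h5 : d + 1 - r = s := by rw [← hs, polyDeg, hd, hcod]
    have h6 : Module.finrank ℝ S ≤ d + 1 := by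
      change Module.finrank ℝ ↥(Submodule.span ℝ {û y0} ⊔ D.map û.linear) ≤ d + 1
      omega
    omega
  have hmemS : ∀ y ∈ affineSpan ℝ P, û y ∈ S := by
    intro y hy
    have : û y = û y0 + û.linear (y - y0) := by
      ext k
      rw [Pi.add_apply, hû, hû, hûl, aff_sub]; ring
    rw [this]
    exact Submodule.add_mem_sup (Submodule.mem_span_singleton_self _)
      (Submodule.mem_map_of_mem (AffineSubspace.vsub_mem_direction hy (hsub hy0)))
  have hSrep : ∀ y ∈ S, (∀ k, 0 ≤ y k) → ∃ t : ℝ, 0 ≤ t ∧ ∃ q ∈ P, y = t • û q := by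
    intro y hy hy0'
    obtain ⟨a, ha, b, hb, rfl⟩ := Submodule.mem_sup.1 hy
    obtain ⟨t, rfl⟩ := Submodule.mem_span_singleton.1 ha
    obtain ⟨w, hw, rfl⟩ := hb
    have hck : ∀ w ∈ D, ∑ k, c k * (u k).linear w = 0 := by
      intro w hw
      have h1 := hcs (w + y0) (AffineSubspace.vadd_mem_of_mem_direction hw (hsub hy0))
      have h2 := hcs y0 (hsub hy0)
      have h3 : ∀ k, (u k).linear w = u k (w + y0) - u k y0 := fun k => by
        rw [← aff_sub, add_sub_cancel_right]
      simp only [h3, mul_sub, Finset.sum_sub_distrib]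
      rw [h1, h2, sub_self]
    have htsum : ∑ k, c k * (t • û y0 + û.linear w) k = t := by
      have : ∀ k, c k * (t • û y0 + û.linear w) k =
          t * (c k * u k y0) + c k * (u k).linear w := fun k => by
        rw [Pi.add_apply, Pi.smul_apply, hû, hûl, smul_eq_mul]; ring
      simp only [this, Finset.sum_add_distrib, ← Finset.mul_sum]
      rw [hck w hw, hcs y0 (hsub hy0)]; ring
    have ht : 0 ≤ t := by
      rw [← htsum]; exact Finset.sum_nonneg fun k _ => mul_nonneg (hc k).le (hy0' k)
    refine ⟨t, ht, ?_⟩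
    rcases ht.eq_or_lt with h0 | hpos
    · refine ⟨y0, hy0, ?_⟩
      rw [← h0] at htsum hy0' ⊢
      rw [Finset.sum_eq_zero_iff_of_nonneg (fun k _ => mul_nonneg (hc k).le (hy0' k))] at htsum
      rw [zero_smul ℝ (û y0)]
      rw [zero_smul ℝ (û y0)] at htsum
      ext k
      have := htsum k (Finset.mem_univ k)
      rcases mul_eq_zero.1 this with h | h
      · exact absurd h (hc k).ne'
      · exact h
    · have hq : ∀ k, t * u k (t⁻¹ • w + y0) = t * u k y0 + (u k).linear w := by
        intro k
        have h1 := aff_sub (u k) (t⁻¹ • w + y0) y0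
        rw [add_sub_cancel_right, map_smul, smul_eq_mul] at h1
        have : u k (t⁻¹ • w + y0) = u k y0 + t⁻¹ * (u k).linear w := by linarith
        rw [this]; field_simp
      refine ⟨t⁻¹ • w + y0, hdesc _ (AffineSubspace.vadd_mem_of_mem_direction
        (Submodule.smul_mem _ _ hw) (hsub hy0)) ?_, ?_⟩
      · intro k
        have h1 := hy0' k
        rw [Pi.add_apply, Pi.smul_apply, hû, hûl, smul_eq_mul, ← hq k] at h1
        exact nonneg_of_mul_nonneg_right h1 hpos
      · ext k
        rw [Pi.add_apply, Pi.smul_apply, Pi.smul_apply, hû, hûl, hû, smul_eq_mul, smul_eq_mul, hq k]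
  have hind : ∀ i, (fun k => if κ k = i then (1 : ℝ) else 0) ∈ S := by
    intro i
    have := hmemS (p i) (hsub (hpP i))
    convert this using 1
    ext k; rw [hû, hκ]
  have hsum : ∀ i, ∑ k, (if κ k = i then c k else 0) = 1 := by
    intro i
    rw [← hcs (p i) (hsub (hpP i))]
    refine Finset.sum_congr rfl fun k _ => ?_
    rw [hκ]; split_ifs <;> simp
  obtain ⟨I, f, hI, hIc, hκf, h2, h3, h4⟩ := core κ S hind c hc hsum hSr
  let l : (Fin N → ℝ) →ᵃ[ℝ] ℝ := ∑ j ∈ Iᶜ, u (f j)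
  have hl : ∀ y, l y = ∑ j ∈ Iᶜ, u (f j) y := by
    intro y
    change (∑ j ∈ Iᶜ, u (f j)) y = _
    induction Iᶜ using Finset.induction_on with
    | empty => simp
    | insert a s ha ih => rw [Finset.sum_insert ha, Finset.sum_insert ha, AffineMap.coe_add, Pi.add_apply, ih]
  have hlint : IsIntegralOn P l := by
    intro y hy hyl
    choose z hz using fun k => hint k y hy hyl
    refine ⟨∑ j ∈ Iᶜ, z (f j), ?_⟩
    rw [hl]; push_cast
    exact Finset.sum_congr rfl fun j _ => hz _
  have hl01 : ∀ v ∈ P, IsLatticePt v → l v = 0 ∨ l v = 1 := by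
    intro v hv hvl
    obtain ⟨z, hz⟩ := hlint v (hsub hv) hvl
    have ha : 0 ≤ l v := by rw [hl]; exact Finset.sum_nonneg fun j _ => hnn _ v hv
    have hb : l v ≤ 1 := by
      have := h2 (û v) (hmemS v (hsub hv)) (fun k => hnn k v hv)
      simp only [hû] at this
      rw [hcs v (hsub hv)] at this
      rw [hl]; exact this
    rw [hz] at ha hb ⊢
    have ha' : 0 ≤ z := by exact_mod_cast ha
    have hb' : z ≤ 1 := by exact_mod_cast hb
    have : z = 0 ∨ z = 1 := by omega
    rcases this with h | h <;> simp [h]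
  set VF := V.filter (fun v => l v = 0) with hVF
  set VG := V.filter (fun v => l v = 1) with hVG
  have hVP : ∀ v ∈ V, v ∈ P := fun v hv => by rw [hPV]; exact subset_convexHull ℝ _ hv
  have hVu : (V : Set (Fin N → ℝ)) = (VF : Set (Fin N → ℝ)) ∪ (VG : Set (Fin N → ℝ)) := by
    ext v
    simp only [hVF, hVG, Finset.coe_filter, Set.mem_union, Set.mem_ofPred_eq, Finset.mem_coe]
    constructor
    · intro hv
      rcases hl01 v (hVP v hv) (hVl v hv) with h | h
      · exact Or.inl ⟨hv, h⟩
      · exact Or.inr ⟨hv, h⟩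
    · rintro (h | h) <;> exact h.1
  set F := convexHull ℝ (VF : Set (Fin N → ℝ)) with hF
  set G := convexHull ℝ (VG : Set (Fin N → ℝ)) with hG
  have hF0 : ∀ y ∈ F, l y = 0 := fun y hy =>
    aff_eq_on_span l 0 (fun v hv => (Finset.mem_filter.1 hv).2) y (convexHull_subset_affineSpan _ hy)
  have hG1 : ∀ y ∈ G, l y = 1 := fun y hy =>
    aff_eq_on_span l 1 (fun v hv => (Finset.mem_filter.1 hv).2) y (convexHull_subset_affineSpan _ hy)
  have hPFG : P = convexHull ℝ (F ∪ G) := by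
    rw [hPV, hVu, hF, hG]
    apply subset_antisymm
    · exact convexHull_mono (Set.union_subset_union (subset_convexHull ℝ _) (subset_convexHull ℝ _))
    · apply convexHull_min _ (convex_convexHull ℝ _)
      exact Set.union_subset (convexHull_mono Set.subset_union_left)
        (convexHull_mono Set.subset_union_right)
  have hlp : ∀ i, l (p i) = if i ∈ I then 0 else 1 := by
    intro i
    rw [hl]
    simp only [hκ, hκf]
    simp
  have hVFne : VF.Nonempty := by
    by_contra hne
    rw [Finset.not_nonempty_iff_eq_empty] at hne
    obtain ⟨i, hi⟩ := hI
    have h1 : p i ∈ G := by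
      have := hpP i
      rw [hPV, hVu, hne] at this
      simpa using this
    have h2 := hG1 _ h1
    rw [hlp, if_pos hi] at h2
    exact zero_ne_one h2
  have hVGne : VG.Nonempty := by
    by_contra hne
    rw [Finset.not_nonempty_iff_eq_empty] at hne
    obtain ⟨i, hi⟩ := hIc
    have h1 : p i ∈ F := by
      have := hpP i
      rw [hPV, hVu, hne] at this
      simpa using this
    have h2 := hF0 _ h1
    rw [hlp, if_neg (Finset.mem_compl.1 hi)] at h2
    exact one_ne_zero h2
  have hFc : Convex ℝ F := convex_convexHull ℝ _
  have hGc : Convex ℝ G := convex_convexHull ℝ _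
  have hFn : F.Nonempty := by
    obtain ⟨v, hv⟩ := hVFne; exact ⟨v, subset_convexHull ℝ _ hv⟩
  have hGn : G.Nonempty := by
    obtain ⟨v, hv⟩ := hVGne; exact ⟨v, subset_convexHull ℝ _ hv⟩
  have hFP : F ⊆ P := by
    rw [hPFG]; exact Set.subset_union_left.trans (subset_convexHull ℝ _)
  have hGP : G ⊆ P := by
    rw [hPFG]; exact Set.subset_union_right.trans (subset_convexHull ℝ _)
  have hsplit : ∀ y ∈ P, ∃ a ∈ F, ∃ b ∈ G, 0 ≤ l y ∧ l y ≤ 1 ∧ y = (1 - l y) • a + l y • b :=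
    fun y hy => join_split hFc hGc hFn hGn l hF0 hG1 y (by rw [← hPFG]; exact hy)
  have hFd : ∀ y ∈ P, l y = 0 → y ∈ F := by
    intro y hy hy'
    obtain ⟨a, ha, b, hb, -, -, hab⟩ := hsplit y hy
    rw [hy'] at hab
    rw [hab]; simpa using ha
  have hGd : ∀ y ∈ P, l y = 1 → y ∈ G := by
    intro y hy hy'
    obtain ⟨a, ha, b, hb, -, -, hab⟩ := hsplit y hy
    rw [hy'] at hab
    rw [hab]; simpa using hb
  have hlû : ∀ y, ∑ j ∈ Iᶜ, û y (f j) = l y := fun y => by rw [hl]; rfl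
  have hcû : ∀ y ∈ P, ∑ k, c k * û y k = 1 := fun y hy => hcs y (hsub hy)
  have h5 := core2 κ S hind c hc I f hκf h3 h4 (by
    intro y hy hy'
    obtain ⟨t, ht, q, hq, rfl⟩ := hSrep y hy hy'
    obtain ⟨a, ha, b, hb, hl0, hl1, hab⟩ := hsplit q hq
    have hqc : û q = (1 - l q) • û a + l q • û b := by
      conv_lhs => rw [hab]
      exact Convex.combo_affine_apply (f := û) (by ring)
    refine ⟨(t * (1 - l q)) • û a, S.smul_mem _ (hmemS a (hsub (hFP ha))),
      (t * l q) • û b, S.smul_mem _ (hmemS b (hsub (hGP hb))), ?_, ?_, ?_, ?_, ?_⟩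
    · intro k
      exact mul_nonneg (mul_nonneg ht (by linarith)) (hnn k a (hFP ha))
    · intro k
      exact mul_nonneg (mul_nonneg ht hl0) (hnn k b (hGP hb))
    · rw [hqc, smul_add, smul_smul, smul_smul]
    · simp only [Pi.smul_apply, smul_eq_mul, ← Finset.mul_sum]
      rw [hlû, hF0 a ha, mul_zero]
    · simp only [Pi.smul_apply, smul_eq_mul, ← Finset.mul_sum, mul_left_comm (c _)]
      rw [hlû, hG1 b hb, hcû b (hGP hb)])
  have hFz : ∀ y ∈ F, ∀ k, κ k ∉ I → u k y = 0 := by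
    intro y hy k hk
    refine h5 (û y) (hmemS y (hsub (hFP hy))) (fun k => hnn k y (hFP hy)) ?_ k hk
    rw [hlû, hF0 y hy]
  have hGz : ∀ y ∈ G, ∀ k, κ k ∉ Iᶜ → u k y = 0 := by
    intro y hy k hk
    refine h3 (û y) (hmemS y (hsub (hGP hy))) (fun k => hnn k y (hGP hy)) ?_ k (by simpa using hk)
    rw [hlû, hG1 y hy, hcû y (hGP hy)]
  have hcF : polyCodeg F = I.card := by
    refine face_codeg u c p κ hint hdesc hnn hc hcs hpP hpl hκ I hI hFc hFP hFz ?_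
    intro y hy hz
    apply hFd y hy
    rw [hl]
    exact Finset.sum_eq_zero fun j hj => hz _ (by rw [hκf]; exact Finset.mem_compl.1 hj)
  have hcG : polyCodeg G = Iᶜ.card := by
    refine face_codeg u c p κ hint hdesc hnn hc hcs hpP hpl hκ Iᶜ hIc hGc hGP hGz ?_
    intro y hy hz
    apply hGd y hy
    rw [← hlû, ← h4 (û y) (hmemS y (hsub hy)) (fun k hk => hz k (by simpa using hk)), hcû y hy]
  refine Or.inr ⟨N, F, G, ⟨VF, hVFne, fun v hv => hVl v (Finset.mem_filter.1 hv).1, rfl⟩,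
    ⟨VG, hVGne, fun v hv => hVl v (Finset.mem_filter.1 hv).1, rfl⟩,
    ⟨iso_lemma hPFG l hF0 hG1 hlint, dim_lemma hPFG hFn hGn l hF0 hG1 ?_⟩, ?_⟩
  · intro w hwF hwG
    refine lin_inj hPb u hdesc hnn y0 hy0 w
      (AffineSubspace.direction_le (affineSpan_mono ℝ hFP) hwF) ?_
    intro k
    by_cases hk : κ k ∈ I
    · exact aff_lin_zero (u k) 0 (fun y hy => hGz y hy k (by simpa using hk)) w hwG
    · exact aff_lin_zero (u k) 0 (fun y hy => hFz y hy k hk) w hwF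
  · rw [hcF, hcG, hcod, Finset.card_add_card_compl, Fintype.card_fin]

/-- An IDP Gorenstein polytope of dimension `d` and degree `s` with `d > 2s` is reducible. -/
theorem stmt4 {N d s : ℕ} (P : Set (Fin N → ℝ))
    (hP : IsLatticePolytope P) (hGor : IsGorenstein P) (hIDP : IsIDP P)
    (hd : polyDim P = d) (hs : polyDeg P = s) (h : 2 * s < d) :
    IsReducible P := by
  exact stmt4_aux P hP hGor hIDP hd hs h
end

section
/- Suppose that every Gorenstein polytope of dimension d and degree s with d > 2s is reducible. Then every Gorenstein polytope of dimension d and degree s with d ≥ 3s is a lattice pyramid. -/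
open Pointwise

section Abstract
variable {E ι : Type*} [AddCommGroup E] [Module ℝ E] [Fintype ι]

def RelC (a : ι → E) (m : E) : Prop := ∃ c : ι → ℝ, (∀ i, 0 < c i) ∧ m = ∑ i, c i • a i

def FF (a : ι → E) (m : E) (l : E →ₗ[ℝ] ℝ) : Prop :=
  (∀ i, 0 ≤ l (a i)) ∧ l m = 1 ∧
    ∀ i, a i ∈ Submodule.span ℝ (insert m {z | ∃ j, z = a j ∧ l (a j) = 0})

def Gor (a : ι → E) (L : Set E) (m : E) : Prop :=
  RelC a m ∧ m ∈ L ∧ ∀ l : E →ₗ[ℝ] ℝ, FF a m l → ∀ y ∈ L, y ∈ Submodule.span ℝ (Set.range a) →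
    ∃ z : ℤ, l y = z

lemma raise_aux (a : ι → E) (m : E) (hm : RelC a m) (z : E) :
    ∀ (n : ℕ) (l : E →ₗ[ℝ] ℝ), (Finset.univ.filter (fun i => l (a i) ≠ 0)).card ≤ n →
      (∀ i, 0 ≤ l (a i)) → l m = 1 → l z < 0 → ∃ l' : E →ₗ[ℝ] ℝ, FF a m l' ∧ l' z < 0 := by
  intro n
  induction n with
  | zero =>
    intro l hc h0 h1 hz
    exfalso
    obtain ⟨c, hc0, rfl⟩ := hm
    have : ∀ i, l (a i) = 0 := by
      intro i
      by_contra hi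
      have : i ∈ (Finset.univ.filter (fun i => l (a i) ≠ 0)) := by simp [hi]
      have := Finset.card_pos.mpr ⟨i, this⟩
      omega
    simp [map_sum, this] at h1
  | succ n ih =>
    intro l hc h0 h1 hz
    by_cases hF : FF a m l
    · exact ⟨l, hF, hz⟩
    have : ∃ i, a i ∉ Submodule.span ℝ (insert m {z | ∃ j, z = a j ∧ l (a j) = 0}) := by
      by_contra hcon
      push Not at hcon
      exact hF ⟨h0, h1, hcon⟩
    obtain ⟨i0, hi0⟩ := this
    obtain ⟨w0, hw0, hw1⟩ := Submodule.exists_le_ker_of_notMem hi0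
    have hex : ∃ w : E →ₗ[ℝ] ℝ, w (a i0) ≠ 0 ∧
        Submodule.span ℝ (insert m {z | ∃ j, z = a j ∧ l (a j) = 0}) ≤ LinearMap.ker w ∧
        w z ≤ 0 := by
      rcases le_total (w0 z) 0 with h | h
      · exact ⟨w0, hw0, hw1, h⟩
      · refine ⟨-w0, by simpa using hw0, ?_, by simpa using h⟩
        intro y hy
        have := hw1 hy
        simpa using this
    obtain ⟨w, hwi, hwk, hwz⟩ := hex
    have hwm : w m = 0 := hwk (Submodule.subset_span (Set.mem_insert _ _))
    have hwt : ∀ j, l (a j) = 0 → w (a j) = 0 := fun j hj =>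
      hwk (Submodule.subset_span (Set.mem_insert_of_mem _ ⟨j, rfl, hj⟩))
    have hneg : ∃ i, w (a i) < 0 := by
      by_contra hcon
      push Not at hcon
      obtain ⟨c, hc0, hmc⟩ := hm
      rw [hmc, map_sum] at hwm
      have h2 := (Finset.sum_eq_zero_iff_of_nonneg (fun i _ => by
        rw [map_smul, smul_eq_mul]; exact mul_nonneg (hc0 i).le (hcon i))).mp hwm i0
          (Finset.mem_univ _)
      rw [map_smul, smul_eq_mul] at h2
      rcases mul_eq_zero.mp h2 with h | h
      · exact (hc0 i0).ne' h
      · exact hwi h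
    obtain ⟨i1, hi1⟩ := hneg
    obtain ⟨i2, hi2, hmin⟩ := Finset.exists_min_image
      (Finset.univ.filter (fun i => w (a i) < 0)) (fun i => l (a i) / (- w (a i)))
      ⟨i1, by simp [hi1]⟩
    simp only [Finset.mem_filter, Finset.mem_univ, true_and] at hi2 hmin
    set t := l (a i2) / (- w (a i2)) with ht
    have ht0 : 0 ≤ t := div_nonneg (h0 _) (by linarith)
    have e2 : l (a i2) + t * w (a i2) = 0 := by
      have hne := hi2.ne
      rw [ht, div_neg, neg_mul, div_mul_cancel₀ _ hne]; ring
    apply ih (l + t • w)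
    · have : (Finset.univ.filter (fun i => (l + t • w) (a i) ≠ 0)) ⊂
          (Finset.univ.filter (fun i => l (a i) ≠ 0)) := by
        rw [Finset.ssubset_iff_of_subset]
        · refine ⟨i2, ?_, ?_⟩
          · simp only [Finset.mem_filter, Finset.mem_univ, true_and]
            intro h
            exact hi2.ne (hwt _ h)
          · simp [e2]
        · intro i
          simp only [Finset.mem_filter, Finset.mem_univ, true_and]
          intro h h'
          apply h
          simp [h', hwt i h']
      have := Finset.card_lt_card this
      omega
    · intro i
      simp only [LinearMap.add_apply, LinearMap.smul_apply, smul_eq_mul]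
      by_cases hw : w (a i) < 0
      · have := hmin i hw
        rw [le_div_iff₀ (by linarith)] at this
        linarith
      · push Not at hw
        have := h0 i
        positivity
    · simp [h1, hwm]
    · simp only [LinearMap.add_apply, LinearMap.smul_apply, smul_eq_mul]
      nlinarith

lemma relC_pos {a : ι → E} {m : E} (hm : RelC a m) {l : E →ₗ[ℝ] ℝ} (h0 : ∀ i, 0 ≤ l (a i)) 
    (h1 : ∃ i, l (a i) ≠ 0) : 0 < l m := by
  obtain ⟨c, hc, rfl⟩ := hm
  obtain ⟨i, hi⟩ := h1
  rw [map_sum]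
  apply Finset.sum_pos'
  · intro i _
    rw [map_smul]
    exact mul_nonneg (hc i).le (h0 i)
  · refine ⟨i, Finset.mem_univ _, ?_⟩
    rw [map_smul]
    exact mul_pos (hc i) (lt_of_le_of_ne (h0 i) (Ne.symm hi))

lemma relC_span {a : ι → E} {m : E} (hm : RelC a m) : m ∈ Submodule.span ℝ (Set.range a) := by
  obtain ⟨c, hc, rfl⟩ := hm
  exact Submodule.sum_mem _ fun i _ => Submodule.smul_mem _ _ (Submodule.subset_span ⟨i, rfl⟩)

lemma gor_sep {a : ι → E} {L : Set E} {m : E} (hG : Gor a L m) {y : E} (hy : RelC a y)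
    (hyL : y ∈ L) (l : E →ₗ[ℝ] ℝ) (h0 : ∀ i, 0 ≤ l (a i)) : 0 ≤ l (y - m) := by
  by_contra hneg
  push Not at hneg
  have h1 : ∃ i, l (a i) ≠ 0 := by
    by_contra hcon
    push Not at hcon
    have hk : Submodule.span ℝ (Set.range a) ≤ LinearMap.ker l := by
      rw [Submodule.span_le]
      rintro _ ⟨i, rfl⟩
      exact hcon i
    have := hk (Submodule.sub_mem _ (relC_span hy) (relC_span hG.1))
    rw [LinearMap.mem_ker] at this
    linarith
  have hp := relC_pos hG.1 h0 h1
  obtain ⟨l', hF, hl'⟩ := raise_aux a m hG.1 (y - m) _ ((l m)⁻¹ • l) le_rfl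
    (fun i => by simpa using mul_nonneg (inv_nonneg.mpr hp.le) (h0 i))
    (by simp [hp.ne']) (by
      simp only [LinearMap.smul_apply, smul_eq_mul]
      exact mul_neg_of_pos_of_neg (inv_pos.mpr hp) hneg)
  obtain ⟨z, hz⟩ := hG.2.2 l' hF y hyL (relC_span hy)
  have hpos : 0 < l' y := by
    apply relC_pos hy hF.1
    by_contra hcon
    push Not at hcon
    obtain ⟨c, hc, hm⟩ := hG.1
    have := hF.2.1
    rw [hm, map_sum] at this
    simp [hcon] at this
  have : (1:ℤ) ≤ z := by
    rw [hz] at hpos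
    exact_mod_cast hpos
  have : (1:ℝ) ≤ z := by exact_mod_cast this
  rw [map_sub, hF.2.1, hz] at hl'
  linarith

lemma gor_unique {a : ι → E} {L : Set E} {m : E} (hG : Gor a L m) {y : E} (hy : RelC a y)
    (hyL : y ∈ L) (h : E →ₗ[ℝ] ℝ) (hh : ∀ i, h (a i) = 1) : 
    h m ≤ h y ∧ (h m = h y → y = m) := by
  constructor
  · have := gor_sep hG hy hyL h (fun i => by rw [hh]; norm_num)
    rw [map_sub] at this
    linarith
  · intro he
    by_contra hne
    have hne' : y - m ∉ (⊥ : Submodule ℝ E) := by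
      simpa [sub_eq_zero] using hne
    obtain ⟨w, hw, -⟩ := Submodule.exists_le_ker_of_notMem hne'
    have key : ∀ w : E →ₗ[ℝ] ℝ, 0 ≤ w (y - m) := by
      intro w
      have := gor_sep hG hy hyL (w + (∑ i, |w (a i)|) • h) (fun i => by
        simp only [LinearMap.add_apply, LinearMap.smul_apply, smul_eq_mul, hh]
        have h1 := Finset.single_le_sum (f := fun i => |w (a i)|) (fun i _ => abs_nonneg _)
          (Finset.mem_univ i)
        have h2 := neg_abs_le (w (a i))
        linarith)
      simpa [map_sub, he] using this
    have h1 := key w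
    have h2 := key (-w)
    simp only [LinearMap.neg_apply] at h2
    exact hw (by linarith)

end Abstract

open Pointwise
section Geo
variable {N : ℕ}

def LL (N : ℕ) : Set ((Fin N → ℝ) × ℝ) := {p | IsLatticePt p.1 ∧ ∃ z : ℤ, p.2 = z}

def hSpan (X : Set (Fin N → ℝ)) (k : ℝ) : Submodule ℝ ((Fin N → ℝ) × ℝ) :=
  Submodule.span ℝ ((fun p => (p, k)) '' X)

lemma hSpan_decomp {X : Set (Fin N → ℝ)} {p0 : Fin N → ℝ} (h0 : p0 ∈ X) (k : ℝ) :
    hSpan X k = Submodule.map (LinearMap.inl ℝ (Fin N → ℝ) ℝ) (vectorSpan ℝ X) ⊔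
      Submodule.span ℝ {(p0, k)} := by
  rw [vectorSpan_eq_span_vsub_set_right ℝ h0, Submodule.map_span]
  apply le_antisymm
  · rw [hSpan, Submodule.span_le]
    rintro _ ⟨p, hp, rfl⟩
    have : ((p, k) : (Fin N → ℝ) × ℝ) = LinearMap.inl ℝ (Fin N → ℝ) ℝ (p - p0) + (p0, k) := by
      simp
    simp only [SetLike.mem_coe]
    rw [this]
    apply Submodule.add_mem_sup
    · exact Submodule.subset_span ⟨p - p0, ⟨p, hp, rfl⟩, rfl⟩
    · exact Submodule.subset_span rfl
  · apply sup_le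
    · rw [Submodule.span_le]
      rintro _ ⟨_, ⟨p, hp, rfl⟩, rfl⟩
      have : LinearMap.inl ℝ (Fin N → ℝ) ℝ (p - p0) = (p, k) - (p0, k) := by simp
      simp only [SetLike.mem_coe, vsub_eq_sub]
      rw [this]
      exact Submodule.sub_mem _ (Submodule.subset_span ⟨p, hp, rfl⟩)
        (Submodule.subset_span ⟨p0, h0, rfl⟩)
    · rw [Submodule.span_le]
      rintro _ rfl
      exact Submodule.subset_span ⟨p0, h0, rfl⟩

lemma finrank_sup_single {E : Type*} [AddCommGroup E] [Module ℝ E] [FiniteDimensional ℝ E]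
    (S : Submodule ℝ E) (m : E) (hm : m ∉ S) :
    Module.finrank ℝ ↥(S ⊔ Submodule.span ℝ {m}) = Module.finrank ℝ S + 1 := by
  have h := Submodule.finrank_sup_add_finrank_inf_eq S (Submodule.span ℝ {m})
  have hne : m ≠ 0 := fun h => hm (h ▸ S.zero_mem)
  have hd : S ⊓ Submodule.span ℝ {m} = ⊥ := by
    rw [← disjoint_iff, Submodule.disjoint_span_singleton' hne]
    exact hm
  rw [hd, finrank_bot, finrank_span_singleton hne] at h
  omega

lemma finrank_hSpan {X : Set (Fin N → ℝ)} (hX : X.Nonempty) {k : ℝ} (hk : k ≠ 0) :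
    Module.finrank ℝ (hSpan X k) = polyDim X + 1 := by
  obtain ⟨p0, h0⟩ := hX
  rw [hSpan_decomp h0, finrank_sup_single, polyDim, direction_affineSpan,
    ← (Submodule.equivMapOfInjective (LinearMap.inl ℝ (Fin N → ℝ) ℝ) LinearMap.inl_injective
      (vectorSpan ℝ X)).finrank_eq]
  · rintro ⟨w, -, hw⟩
    have := congrArg Prod.snd hw
    simp at this
    exact hk this.symm

lemma mem_hSpan_iff {X : Set (Fin N → ℝ)} (hX : X.Nonempty) {k : ℝ} (hk : k ≠ 0) (y : Fin N → ℝ) :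
    (y, k) ∈ hSpan X k ↔ y ∈ affineSpan ℝ X := by
  obtain ⟨p0, h0⟩ := hX
  have h0' : p0 ∈ affineSpan ℝ X := subset_affineSpan ℝ X h0
  rw [hSpan_decomp h0, ← AffineSubspace.vsub_right_mem_direction_iff_mem h0', direction_affineSpan,
    Submodule.mem_sup]
  constructor
  · rintro ⟨_, ⟨w, hw, rfl⟩, q, hq, he⟩
    obtain ⟨c, rfl⟩ := Submodule.mem_span_singleton.mp hq
    have h1 := congrArg Prod.snd he
    have h2 := congrArg Prod.fst he
    simp only [Prod.snd_add, LinearMap.inl_apply, Prod.smul_snd, smul_eq_mul, zero_add,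
      Prod.fst_add, Prod.smul_fst] at h1 h2
    have hc : c = 1 := by
      apply mul_right_cancel₀ hk
      rw [h1, one_mul]
    rw [← h2, hc]
    simpa using hw
  · intro h
    refine ⟨_, ⟨y - p0, h, rfl⟩, (p0, k), Submodule.mem_span_singleton_self _, by simp⟩

lemma mem_conv_iff {ι : Type*} [Fintype ι] (v : ι → (Fin N → ℝ)) (p : Fin N → ℝ) :
    p ∈ convexHull ℝ (Set.range v) ↔ ∃ c : ι → ℝ, (∀ i, 0 ≤ c i) ∧ ∑ i, c i = 1 ∧
      p = ∑ i, c i • v i := by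
  classical
  constructor
  · intro hp
    have : convexHull ℝ (Set.range v) ⊆ {p | ∃ c : ι → ℝ, (∀ i, 0 ≤ c i) ∧ ∑ i, c i = 1 ∧
      p = ∑ i, c i • v i} := by
      apply convexHull_min
      · rintro _ ⟨i, rfl⟩
        refine ⟨Pi.single i 1, fun j => ?_, ?_, ?_⟩
        · by_cases h : j = i
          · subst h; simp
          · simp [h]
        · simp
        · simp [Pi.single_apply]
      · rintro _ ⟨c, hc, hc1, rfl⟩ _ ⟨c', hc', hc1', rfl⟩ a b ha hb hab
        refine ⟨fun i => a * c i + b * c' i, fun i => ?_, ?_, ?_⟩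
        · have := hc i; have := hc' i; positivity
        · rw [Finset.sum_add_distrib, ← Finset.mul_sum, ← Finset.mul_sum, hc1, hc1']; linarith
        · simp only [add_smul, mul_smul, Finset.sum_add_distrib, Finset.smul_sum]
    exact this hp
  · rintro ⟨c, hc, hc1, rfl⟩
    exact (convex_convexHull ℝ _).sum_mem (fun i _ => hc i) hc1
      (fun i _ => subset_convexHull _ _ ⟨i, rfl⟩)

def hm {ι : Type*} (v : ι → (Fin N → ℝ)) : ι → (Fin N → ℝ) × ℝ := fun i => (v i, 1)

lemma mem_smul_conv_iff {ι : Type*} [Fintype ι] (v : ι → (Fin N → ℝ)) (p : Fin N → ℝ) {r : ℝ}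
    (hr : 0 < r) :
    p ∈ r • convexHull ℝ (Set.range v) ↔ ∃ c : ι → ℝ, (∀ i, 0 ≤ c i) ∧
      (p, r) = ∑ i, c i • hm v i := by
  rw [Set.mem_smul_set]
  constructor
  · rintro ⟨q, hq, rfl⟩
    obtain ⟨c, hc, hc1, rfl⟩ := (mem_conv_iff v q).mp hq
    refine ⟨fun i => r * c i, fun i => mul_nonneg hr.le (hc i), ?_⟩
    ext1
    · simp [hm, Prod.fst_sum, mul_smul, Finset.smul_sum]
    · simp [hm, Prod.snd_sum, ← Finset.mul_sum, hc1]
  · rintro ⟨c, hc, he⟩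
    have h1 := congrArg Prod.fst he
    have h2 := congrArg Prod.snd he
    simp [hm, Prod.fst_sum, Prod.snd_sum] at h1 h2
    refine ⟨r⁻¹ • p, (mem_conv_iff v _).mpr ⟨fun i => r⁻¹ * c i, fun i => ?_, ?_, ?_⟩, ?_⟩
    · exact mul_nonneg (inv_nonneg.mpr hr.le) (hc i)
    · rw [← Finset.mul_sum, ← h2, inv_mul_cancel₀ hr.ne']
    · simp [h1, mul_smul, Finset.smul_sum]
    · simp [smul_smul, hr.ne']

lemma hSpan_smul_conv {ι : Type*} [Fintype ι] (v : ι → (Fin N → ℝ)) {r : ℝ} (hr : 0 < r) :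
    hSpan (r • convexHull ℝ (Set.range v)) r = Submodule.span ℝ (Set.range (hm v)) := by
  apply le_antisymm
  · rw [hSpan, Submodule.span_le]
    rintro _ ⟨p, hp, rfl⟩
    obtain ⟨c, hc, he⟩ := (mem_smul_conv_iff v p hr).mp hp
    simp only [SetLike.mem_coe]
    rw [he]
    exact Submodule.sum_mem _ fun i _ => Submodule.smul_mem _ _ (Submodule.subset_span ⟨i, rfl⟩)
  · rw [Submodule.span_le]
    rintro _ ⟨i, rfl⟩
    have : hm v i = r⁻¹ • (r • v i, r) := by simp [hm, smul_smul, hr.ne']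
    simp only [SetLike.mem_coe]
    rw [this]
    apply Submodule.smul_mem
    exact Submodule.subset_span ⟨r • v i, Set.smul_mem_smul_set (subset_convexHull _ _ ⟨i, rfl⟩), rfl⟩

lemma relint_iff_ball {X : Set (Fin N → ℝ)} {x : Fin N → ℝ} :
    x ∈ intrinsicInterior ℝ X ↔ x ∈ affineSpan ℝ X ∧
      ∃ δ > 0, ∀ y ∈ affineSpan ℝ X, dist y x < δ → y ∈ X := by
  rw [mem_intrinsicInterior]
  constructor
  · rintro ⟨y, hy, rfl⟩
    refine ⟨y.2, ?_⟩
    rw [mem_interior_iff_mem_nhds, Metric.mem_nhds_iff] at hy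
    obtain ⟨δ, hδ, hb⟩ := hy
    exact ⟨δ, hδ, fun z hz hd => hb (a := ⟨z, hz⟩) hd⟩
  · rintro ⟨hx, δ, hδ, hb⟩
    refine ⟨⟨x, hx⟩, ?_, rfl⟩
    rw [mem_interior_iff_mem_nhds, Metric.mem_nhds_iff]
    exact ⟨δ, hδ, fun z hz => hb z z.2 hz⟩

lemma relint_push {X : Set (Fin N → ℝ)} {x b : Fin N → ℝ} (hx : x ∈ intrinsicInterior ℝ X)
    (hb : b ∈ X) : ∃ ε : ℝ, 0 < ε ∧ x + ε • (x - b) ∈ X := by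
  obtain ⟨hxa, δ, hδ, hball⟩ := relint_iff_ball.mp hx
  refine ⟨δ / (2 * (‖x - b‖ + 1)), by positivity, hball _ ?_ ?_⟩
  · have := AffineMap.lineMap_mem (Q := affineSpan ℝ X) (1 + δ / (2 * (‖x - b‖ + 1)))
      (subset_affineSpan ℝ X hb) hxa
    convert this using 1
    rw [AffineMap.lineMap_apply_module]
    module
  · rw [dist_eq_norm, add_sub_cancel_left, norm_smul, Real.norm_of_nonneg (by positivity)]
    rw [div_mul_eq_mul_div, div_lt_iff₀ (by positivity)]
    nlinarith [norm_nonneg (x - b)]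

lemma relint_of_push {X : Set (Fin N → ℝ)} (hX : Convex ℝ X) {x z : Fin N → ℝ}
    (hz : z ∈ intrinsicInterior ℝ X) {ε : ℝ} (hε : 0 < ε) (h : x + ε • (x - z) ∈ X) :
    x ∈ intrinsicInterior ℝ X := by
  obtain ⟨hza, δ, hδ, hball⟩ := relint_iff_ball.mp hz
  set x' := x + ε • (x - z) with hx'
  have hx'a := subset_affineSpan ℝ X h
  have h1 : (0:ℝ) < 1 + ε := by positivity
  have hxe : x = (1 / (1 + ε)) • x' + (ε / (1 + ε)) • z := by
    rw [hx']
    ext i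
    simp
    field_simp
    ring
  rw [relint_iff_ball]
  constructor
  · apply subset_affineSpan ℝ X
    rw [hxe]
    exact hX h (intrinsicInterior_subset hz) (by positivity) (by positivity) (by field_simp)
  · refine ⟨δ * (ε / (1 + ε)), by positivity, fun y hy hd => ?_⟩
    have hy' : AffineMap.lineMap x' y ((1 + ε) / ε) ∈ affineSpan ℝ X :=
      AffineMap.lineMap_mem _ hx'a hy
    have hw : AffineMap.lineMap x' y ((1 + ε) / ε) ∈ X := by
      apply hball _ hy'
      have : AffineMap.lineMap x' y ((1 + ε) / ε) - z = ((1 + ε) / ε) • (y - x) := by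
        rw [AffineMap.lineMap_apply_module, hx']
        ext i
        simp
        field_simp
        ring
      rw [dist_eq_norm, this, norm_smul, Real.norm_of_nonneg (by positivity), ← dist_eq_norm]
      rw [div_mul_eq_mul_div, div_lt_iff₀ hε]
      rw [mul_div_assoc', lt_div_iff₀ h1] at hd
      linarith
    have : y = (1 / (1 + ε)) • x' + (ε / (1 + ε)) • (AffineMap.lineMap x' y ((1 + ε) / ε)) := by
      rw [AffineMap.lineMap_apply_module]
      ext i
      simp
      field_simp
      ring
    rw [this]
    exact hX h hw (by positivity) (by positivity) (by field_simp)

lemma relC_of_relint {ι : Type*} [Fintype ι] [Nonempty ι] {v : ι → (Fin N → ℝ)} {x : Fin N → ℝ}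
    {r : ℝ} (hr : 0 < r) (hx : x ∈ intrinsicInterior ℝ (r • convexHull ℝ (Set.range v))) :
    RelC (hm v) (x, r) := by
  set K : ℝ := r / (Fintype.card ι : ℝ) with hK
  have hcard : (0:ℝ) < Fintype.card ι := by exact_mod_cast Fintype.card_pos
  have hK0 : 0 < K := div_pos hr hcard
  set b : Fin N → ℝ := ∑ i, K • v i with hb
  have hbr : (b, r) = ∑ i, K • hm v i := by
    ext1
    · simp [hm, Prod.fst_sum, hb]
    · simp [hm, Prod.snd_sum, hK]
      field_simp
  have hbm : b ∈ r • convexHull ℝ (Set.range v) :=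
    (mem_smul_conv_iff v b hr).mpr ⟨fun _ => K, fun _ => hK0.le, hbr⟩
  obtain ⟨ε, hε, hq⟩ := relint_push hx hbm
  obtain ⟨c, hc, he⟩ := (mem_smul_conv_iff v _ hr).mp hq
  refine ⟨fun i => (1 / (1 + ε)) * (c i + ε * K), fun i => ?_, ?_⟩
  · have := hc i; positivity
  · simp only [mul_smul, add_smul, Finset.sum_add_distrib, ← Finset.smul_sum, ← he, ← hbr]
    ext i
    · simp
      field_simp
      ring
    · simp
      field_simp

lemma relint_sum {ι : Type*} [Fintype ι] [Nonempty ι] (v : ι → (Fin N → ℝ)) :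
    ∑ i, v i ∈ intrinsicInterior ℝ ((Fintype.card ι : ℝ) • convexHull ℝ (Set.range v)) := by
  have hcard : (0:ℝ) < Fintype.card ι := by exact_mod_cast Fintype.card_pos
  set r : ℝ := (Fintype.card ι : ℝ) with hr
  have hcv : Convex ℝ (r • convexHull ℝ (Set.range v)) := (convex_convexHull ℝ _).smul r
  have hne : (r • convexHull ℝ (Set.range v)).Nonempty :=
    (Set.Nonempty.convexHull (Set.range_nonempty v)).smul_set
  obtain ⟨z, hz⟩ := Set.Nonempty.intrinsicInterior hcv hne
  obtain ⟨c, hc, he⟩ := (mem_smul_conv_iff v z hcard).mp (intrinsicInterior_subset hz)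
  have hS : 0 ≤ ∑ i, c i := Finset.sum_nonneg fun i _ => hc i
  refine relint_of_push hcv hz (ε := 1 / (1 + ∑ i, c i)) (by positivity) ?_
  rw [mem_smul_conv_iff v _ hcard]
  refine ⟨fun i => 1 + (1 / (1 + ∑ i, c i)) * (1 - c i), fun i => ?_, ?_⟩
  · have h1 := Finset.single_le_sum (f := c) (fun i _ => hc i) (Finset.mem_univ i)
    have := hc i
    have : (0:ℝ) < 1 + ∑ i, c i := by positivity
    field_simp
    linarith
  · have hs : (∑ i, v i, r) = ∑ i, hm v i := by
      ext1
      · simp [hm, Prod.fst_sum]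
      · simp [hm, Prod.snd_sum, hr]
    simp only [mul_smul, add_smul, sub_smul, one_smul, Finset.sum_add_distrib, ← Finset.smul_sum, 
      Finset.sum_sub_distrib, ← he, ← hs]
    ext i
    · simp
    · simp
end Geo

open Pointwise
section Trans
variable {N : ℕ} {ι : Type*} [Fintype ι]

lemma aff_eq (u : (Fin N → ℝ) →ᵃ[ℝ] ℝ) (y : Fin N → ℝ) : u y = u.linear y + u 0 := by
  have := u.map_vadd 0 y
  simpa using this

lemma latt_add {x y : Fin N → ℝ} (hx : IsLatticePt x) (hy : IsLatticePt y) :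
    IsLatticePt (x + y) := by
  intro i
  obtain ⟨a, ha⟩ := hx i
  obtain ⟨b, hb⟩ := hy i
  exact ⟨a + b, by simp [ha, hb]⟩

lemma latt_smul {x : Fin N → ℝ} (hx : IsLatticePt x) (k : ℤ) : IsLatticePt ((k : ℝ) • x) := by
  intro i
  obtain ⟨a, ha⟩ := hx i
  exact ⟨k * a, by simp [ha]⟩

lemma polyDim_smul_conv [Nonempty ι] (v : ι → (Fin N → ℝ)) {r : ℝ} (hr : 0 < r) :
    Module.finrank ℝ (Submodule.span ℝ (Set.range (hm v))) =
      polyDim (r • convexHull ℝ (Set.range v)) + 1 := by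
  rw [← hSpan_smul_conv v hr, finrank_hSpan _ hr.ne']
  exact (Set.Nonempty.convexHull (Set.range_nonempty v)).smul_set

lemma polyDim_conv [Nonempty ι] (v : ι → (Fin N → ℝ)) :
    Module.finrank ℝ (Submodule.span ℝ (Set.range (hm v))) =
      polyDim (convexHull ℝ (Set.range v)) + 1 := by
  have := polyDim_smul_conv v one_pos
  rwa [one_smul] at this

lemma mem_smul_span [Nonempty ι] (v : ι → (Fin N → ℝ)) {r : ℝ} (hr : 0 < r) (y : Fin N → ℝ) :
    (y, r) ∈ Submodule.span ℝ (Set.range (hm v)) ↔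
      y ∈ affineSpan ℝ (r • convexHull ℝ (Set.range v)) := by
  rw [← hSpan_smul_conv v hr, mem_hSpan_iff _ hr.ne']
  exact (Set.Nonempty.convexHull (Set.range_nonempty v)).smul_set

lemma nonneg_smul {v : ι → (Fin N → ℝ)} {l : (Fin N → ℝ) × ℝ →ₗ[ℝ] ℝ}
    (h0 : ∀ i, 0 ≤ l (hm v i)) {r : ℝ} (hr : 0 < r) {p : Fin N → ℝ} 
    (hp : p ∈ r • convexHull ℝ (Set.range v)) : 0 ≤ l (p, r) := by
  obtain ⟨c, hc, he⟩ := (mem_smul_conv_iff v p hr).mp hp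
  rw [he, map_sum]
  exact Finset.sum_nonneg fun i _ => by
    rw [map_smul, smul_eq_mul]; exact mul_nonneg (hc i) (h0 i)

lemma gor_of_reflexive [Nonempty ι] {v : ι → (Fin N → ℝ)} (hv : ∀ i, IsLatticePt (v i))
    (hd : 0 < polyDim (convexHull ℝ (Set.range v))) {r : ℕ} (hr : 0 < r)
    (hR : IsReflexivePolytope ((r : ℝ) • convexHull ℝ (Set.range v))) :
    ∃ x ∈ intrinsicInterior ℝ ((r : ℝ) • convexHull ℝ (Set.range v)), IsLatticePt x ∧
      Gor (hm v) (LL N) (x, (r : ℝ)) := by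
  have hr' : (0:ℝ) < r := by exact_mod_cast hr
  obtain ⟨x, hx, hxL, hF⟩ := hR
  have hrel := relC_of_relint hr' hx
  refine ⟨x, hx, hxL, hrel, ⟨hxL, r, by simp⟩, ?_⟩
  intro l hl y hy hyS
  obtain ⟨h0, h1, hsp⟩ := hl
  -- a tight vertex
  have htight : ∃ j, l (hm v j) = 0 := by
    by_contra hcon
    push Not at hcon
    have he : {z | ∃ j, z = hm v j ∧ l (hm v j) = 0} = ∅ := by
      ext z
      simp only [Set.mem_ofPred_eq, Set.mem_empty_iff_false, iff_false]
      rintro ⟨j, -, hj⟩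
      exact hcon j hj
    rw [he] at hsp
    have hle : Submodule.span ℝ (Set.range (hm v)) ≤
        Submodule.span ℝ {((x, (r:ℝ)) : (Fin N → ℝ) × ℝ)} := by
      rw [Submodule.span_le]
      rintro _ ⟨i, rfl⟩
      simpa using hsp i
    have h2 := Submodule.finrank_mono hle
    have h3 := finrank_span_le_card (R := ℝ) ({((x, (r:ℝ)) : (Fin N → ℝ) × ℝ)} : Set _)
    simp at h3
    rw [polyDim_conv] at h2
    omega
  obtain ⟨j, hj⟩ := htight
  set A : Set (Fin N → ℝ) := (r : ℝ) • convexHull ℝ (Set.range v) with hA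
  have hmemA : ∀ i, (r : ℝ) • v i ∈ A := fun i =>
    Set.smul_mem_smul_set (subset_convexHull _ _ ⟨i, rfl⟩)
  have hscale : ∀ i, (((r:ℝ) • v i, (r:ℝ)) : (Fin N → ℝ) × ℝ) = (r:ℝ) • hm v i := by
    intro i; simp [hm]
  set Φ : Set (Fin N → ℝ) := {p ∈ A | l (p, (r:ℝ)) = 0} with hΦ
  have hjΦ : (r : ℝ) • v j ∈ Φ := ⟨hmemA j, by rw [hscale, map_smul, hj, smul_zero]⟩
  have hsplit : ∀ p : Fin N → ℝ, l (p, (r:ℝ)) = l (p, 0) + l (0, (r:ℝ)) := by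
    intro p
    rw [← map_add]; simp
  -- spanning
  have hspan : Submodule.span ℝ (Set.range (hm v)) =
      hSpan Φ r ⊔ Submodule.span ℝ {((x, (r:ℝ)) : (Fin N → ℝ) × ℝ)} := by
    apply le_antisymm
    · rw [Submodule.span_le]
      rintro _ ⟨i, rfl⟩
      have : Submodule.span ℝ (insert ((x, (r:ℝ)) : (Fin N → ℝ) × ℝ)
          {z | ∃ j, z = hm v j ∧ l (hm v j) = 0}) ≤
          hSpan Φ r ⊔ Submodule.span ℝ {((x, (r:ℝ)) : (Fin N → ℝ) × ℝ)} := by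
        rw [Submodule.span_le]
        rintro z (rfl | ⟨k, rfl, hk⟩)
        · exact Submodule.mem_sup_right (Submodule.mem_span_singleton_self _)
        · apply Submodule.mem_sup_left
          have : hm v k = (r:ℝ)⁻¹ • ((r:ℝ) • v k, (r:ℝ)) := by
            rw [hscale, smul_smul, inv_mul_cancel₀ hr'.ne', one_smul]
          rw [this]
          apply Submodule.smul_mem
          exact Submodule.subset_span ⟨(r:ℝ) • v k,
            ⟨hmemA k, by rw [hscale, map_smul, hk, smul_zero]⟩, rfl⟩
      exact this (hsp i)
    · apply sup_le
      · rw [← hSpan_smul_conv v hr']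
        exact Submodule.span_mono (Set.image_mono fun p hp => hp.1)
      · rw [Submodule.span_singleton_le_iff_mem]
        exact relC_span hrel
  have hker : hSpan Φ r ≤ LinearMap.ker l := by
    rw [hSpan, Submodule.span_le]
    rintro _ ⟨p, hp, rfl⟩
    exact hp.2
  have hfacet : IsFacet A Φ := by
    refine ⟨?_, ⟨_, hjΦ⟩, ?_⟩
    · intro _
      refine ⟨LinearMap.toContinuousLinearMap (-(l.comp (LinearMap.inl ℝ (Fin N → ℝ) ℝ))), ?_⟩
      ext p
      simp only [hΦ, Set.mem_ofPred_eq, LinearMap.coe_toContinuousLinearMap', LinearMap.neg_apply,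
        LinearMap.comp_apply, LinearMap.inl_apply, neg_le_neg_iff]
      apply and_congr_right
      intro hp
      have hp0 := nonneg_smul h0 hr' hp
      constructor
      · intro h q hq
        have := nonneg_smul h0 hr' hq
        rw [hsplit] at h this
        linarith
      · intro h
        have h3 := h _ hjΦ.1
        have h4 := hjΦ.2
        rw [hsplit] at h4 hp0 ⊢
        linarith
    · have h2 := polyDim_smul_conv v hr'
      rw [hspan, finrank_sup_single, finrank_hSpan ⟨_, hjΦ⟩ hr'.ne'] at h2
      · rw [← hA] at h2
        omega
      · intro h
        have := hker h
        rw [LinearMap.mem_ker, h1] at this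
        exact one_ne_zero this
  obtain ⟨u, hu, huΦ⟩ := hF Φ hfacet
  set û : (Fin N → ℝ) × ℝ →ₗ[ℝ] ℝ :=
    ((u x + 1 - u 0) / r) • LinearMap.snd ℝ (Fin N → ℝ) ℝ -
      u.linear.comp (LinearMap.fst ℝ (Fin N → ℝ) ℝ) with hû
  have hûr : ∀ p, û (p, (r:ℝ)) = u x + 1 - u p := by
    intro p
    rw [aff_eq u p]
    simp only [hû, LinearMap.sub_apply, LinearMap.smul_apply, LinearMap.snd_apply,
      LinearMap.comp_apply, LinearMap.fst_apply, smul_eq_mul]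
    field_simp
    ring
  have hagree : ∀ z ∈ Submodule.span ℝ (Set.range (hm v)), û z = l z := by
    have hle : Submodule.span ℝ (Set.range (hm v)) ≤ LinearMap.eqLocus û l := by
      rw [hspan]
      apply sup_le
      · rw [hSpan, Submodule.span_le]
        rintro _ ⟨p, hp, rfl⟩
        show û (p, (r:ℝ)) = l (p, (r:ℝ))
        rw [hûr, huΦ p hp, hp.2]; ring
      · rw [Submodule.span_singleton_le_iff_mem]
        show û (x, (r:ℝ)) = l (x, (r:ℝ))
        rw [hûr, h1]; ring
    exact fun z hz => hle hz
  obtain ⟨y1, y2⟩ := y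
  obtain ⟨hy1, k, hk⟩ := hy
  simp only at hy1 hk
  subst hk
  set y' : Fin N → ℝ := y1 + (((r:ℤ) - k : ℤ) : ℝ) • v j with hy'
  have hy'L : IsLatticePt y' := latt_add hy1 (latt_smul (hv j) _)
  have hye : ((y', (r:ℝ)) : (Fin N → ℝ) × ℝ) = (y1, (k:ℝ)) + (((r:ℤ) - k : ℤ) : ℝ) • hm v j := by
    ext1
    · simp [hm, hy']
    · simp [hm]
  have hy'S : ((y', (r:ℝ)) : (Fin N → ℝ) × ℝ) ∈ Submodule.span ℝ (Set.range (hm v)) := by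
    rw [hye]
    exact Submodule.add_mem _ hyS (Submodule.smul_mem _ _ (Submodule.subset_span ⟨j, rfl⟩))
  have hle : l (y1, (k:ℝ)) = u x + 1 - u y' := by
    rw [← hûr, hagree _ hy'S, hye, map_add, map_smul, hj, smul_zero, add_zero]
  obtain ⟨a, ha⟩ := hu x (subset_affineSpan ℝ _ (intrinsicInterior_subset hx)) hxL
  obtain ⟨b, hb⟩ := hu y' ((mem_smul_span v hr' y').mp hy'S) hy'L
  exact ⟨a + 1 - b, by rw [hle, ha, hb]; push_cast; ring⟩

lemma isGor_of_gor [Nonempty ι] {v : ι → (Fin N → ℝ)} {r : ℕ} (hr : 0 < r) {y : Fin N → ℝ}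
    (hy : y ∈ intrinsicInterior ℝ ((r : ℝ) • convexHull ℝ (Set.range v)))
    (hG : Gor (hm v) (LL N) (y, (r : ℝ))) : IsGorenstein (convexHull ℝ (Set.range v)) := by
  have hr' : (0:ℝ) < r := by exact_mod_cast hr
  refine ⟨r, hr, y, hy, hG.2.1.1, ?_⟩
  set A : Set (Fin N → ℝ) := (r : ℝ) • convexHull ℝ (Set.range v) with hA
  have hmemA : ∀ i, (r : ℝ) • v i ∈ A := fun i =>
    Set.smul_mem_smul_set (subset_convexHull _ _ ⟨i, rfl⟩)
  have hscale : ∀ i, (((r:ℝ) • v i, (r:ℝ)) : (Fin N → ℝ) × ℝ) = (r:ℝ) • hm v i := by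
    intro i; simp [hm]
  rintro Φ ⟨hexp, ⟨q, hq⟩, hdim⟩
  obtain ⟨φ, hφ⟩ := hexp ⟨q, hq⟩
  have hqA : q ∈ A ∧ ∀ y ∈ A, φ y ≤ φ q := by rw [hφ] at hq; exact hq
  set l0 : (Fin N → ℝ) × ℝ →ₗ[ℝ] ℝ := (φ q / r) • LinearMap.snd ℝ (Fin N → ℝ) ℝ -
      (φ : (Fin N → ℝ) →ₗ[ℝ] ℝ).comp (LinearMap.fst ℝ (Fin N → ℝ) ℝ) with hl0
  have hl0r : ∀ p, l0 (p, (r:ℝ)) = φ q - φ p := by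
    intro p
    simp only [hl0, LinearMap.sub_apply, LinearMap.smul_apply, LinearMap.snd_apply,
      LinearMap.comp_apply, LinearMap.fst_apply, smul_eq_mul, ContinuousLinearMap.coe_coe]
    field_simp
  have h0 : ∀ i, 0 ≤ l0 (hm v i) := by
    intro i
    have h1 := hqA.2 _ (hmemA i)
    have h2 := hl0r ((r:ℝ) • v i)
    rw [hscale, map_smul, smul_eq_mul] at h2
    by_contra hcon
    push Not at hcon
    have := mul_neg_of_pos_of_neg hr' hcon
    linarith
  have hΦiff : ∀ p, p ∈ Φ ↔ p ∈ A ∧ l0 (p, (r:ℝ)) = 0 := by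
    intro p
    rw [hφ, hl0r]
    constructor
    · rintro ⟨hp, h⟩
      exact ⟨hp, by have := h q hqA.1; have := hqA.2 p hp; linarith⟩
    · rintro ⟨hp, h⟩
      exact ⟨hp, fun z hz => by have := hqA.2 z hz; linarith⟩
  have hex : ∃ i, l0 (hm v i) ≠ 0 := by
    by_contra hcon
    push Not at hcon
    have : Φ = A := by
      ext p
      rw [hΦiff]
      constructor
      · exact fun h => h.1
      · intro hp
        refine ⟨hp, ?_⟩
        obtain ⟨c, hc, he⟩ := (mem_smul_conv_iff v p hr').mp hp
        rw [he, map_sum]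
        simp [hcon]
    rw [this] at hdim
    omega
  have hpos := relC_pos hG.1 h0 hex
  set t := l0 (y, (r:ℝ)) with ht
  set l := t⁻¹ • l0 with hl
  have hlz : ∀ z, l z = 0 ↔ l0 z = 0 := by
    intro z
    simp [hl, hpos.ne']
  have hFF : FF (hm v) (y, (r:ℝ)) l := by
    refine ⟨fun i => ?_, ?_, ?_⟩
    · simp only [hl, LinearMap.smul_apply, smul_eq_mul]
      exact mul_nonneg (inv_nonneg.mpr hpos.le) (h0 i)
    · simp only [hl, LinearMap.smul_apply, smul_eq_mul, ← ht]
      exact inv_mul_cancel₀ hpos.ne'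
    · have hsub : hSpan Φ r ⊔ Submodule.span ℝ {((y, (r:ℝ)) : (Fin N → ℝ) × ℝ)} ≤
          Submodule.span ℝ (Set.range (hm v)) := by
        apply sup_le
        · rw [← hSpan_smul_conv v hr']
          exact Submodule.span_mono (Set.image_mono fun p hp => ((hΦiff p).mp hp).1)
        · rw [Submodule.span_singleton_le_iff_mem]
          exact relC_span hG.1
      have hnot : ((y, (r:ℝ)) : (Fin N → ℝ) × ℝ) ∉ hSpan Φ r := by
        intro h
        have hk : hSpan Φ r ≤ LinearMap.ker l0 := by
          rw [hSpan, Submodule.span_le]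
          rintro _ ⟨p, hp, rfl⟩
          exact ((hΦiff p).mp hp).2
        have := hk h
        rw [LinearMap.mem_ker] at this
        linarith
      have heq := Submodule.eq_of_le_of_finrank_eq hsub (by
        rw [polyDim_smul_conv v hr', finrank_sup_single _ _ hnot,
          finrank_hSpan ⟨q, hq⟩ hr'.ne', hdim])
      intro i
      have hi : hm v i ∈ Submodule.span ℝ (Set.range (hm v)) := Submodule.subset_span ⟨i, rfl⟩
      rw [← heq] at hi
      refine (sup_le ?_ ?_ : hSpan Φ r ⊔ Submodule.span ℝ {((y, (r:ℝ)) : (Fin N → ℝ) × ℝ)} ≤ _) hi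
      · rw [hSpan, Submodule.span_le]
        rintro _ ⟨p, hp, rfl⟩
        obtain ⟨hpA, hp0⟩ := (hΦiff p).mp hp
        obtain ⟨c, hc, he⟩ := (mem_smul_conv_iff v p hr').mp hpA
        rw [he, map_sum] at hp0
        have hz := (Finset.sum_eq_zero_iff_of_nonneg (fun i _ => by
          rw [map_smul, smul_eq_mul]; exact mul_nonneg (hc i) (h0 i))).mp hp0
        simp only [SetLike.mem_coe]
        rw [he]
        apply Submodule.sum_mem
        intro k _
        have hk := hz k (Finset.mem_univ _)
        rw [map_smul, smul_eq_mul] at hk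
        rcases mul_eq_zero.mp hk with h | h
        · rw [h, zero_smul]; exact Submodule.zero_mem _
        · exact Submodule.smul_mem _ _ (Submodule.subset_span
            (Set.mem_insert_of_mem _ ⟨k, rfl, (hlz _).mpr h⟩))
      · rw [Submodule.span_singleton_le_iff_mem]
        exact Submodule.subset_span (Set.mem_insert _ _)
  have hint := hG.2.2 l hFF
  refine ⟨(-(l.comp (LinearMap.inl ℝ (Fin N → ℝ) ℝ))).toAffineMap +
    AffineMap.const ℝ (Fin N → ℝ) (-(l (0, (r:ℝ)))), ?_⟩
  have hu : ∀ p, ((-(l.comp (LinearMap.inl ℝ (Fin N → ℝ) ℝ))).toAffineMap +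
    AffineMap.const ℝ (Fin N → ℝ) (-(l (0, (r:ℝ))))) p = - l (p, (r:ℝ)) := by
    intro p
    have : l (p, (r:ℝ)) = l (p, 0) + l (0, (r:ℝ)) := by rw [← map_add]; simp
    simp [this]
    ring
  constructor
  · intro p hp hpL
    obtain ⟨z, hz⟩ := hint (p, (r:ℝ)) ⟨hpL, r, by simp⟩ ((mem_smul_span v hr' p).mpr hp)
    exact ⟨-z, by rw [hu, hz]; simp⟩
  · intro p hp
    rw [hu, hu, hFF.2.1, (hlz _).mpr ((hΦiff p).mp hp).2]
    ring
end Trans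

open Pointwise
section Core
variable {N n : ℕ} {ι κ : Type} [Fintype ι] [Fintype κ]

def jj (α : (Fin n → ℝ) →ᵃ[ℝ] (Fin N → ℝ)) : (Fin n → ℝ) × ℝ →ₗ[ℝ] (Fin N → ℝ) × ℝ :=
  LinearMap.prod (α.linear.comp (LinearMap.fst ℝ _ _) +
    (LinearMap.toSpanSingleton ℝ _ (α 0)).comp (LinearMap.snd ℝ _ _)) (LinearMap.snd ℝ _ _)

lemma jj_one (α : (Fin n → ℝ) →ᵃ[ℝ] (Fin N → ℝ)) (y : Fin n → ℝ) : jj α (y, 1) = (α y, 1) := by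
  have h : α y = α.linear y + α 0 := by simpa using α.map_vadd 0 y
  simp [jj, h]

lemma jj_snd (α : (Fin n → ℝ) →ᵃ[ℝ] (Fin N → ℝ)) (y : (Fin n → ℝ) × ℝ) : (jj α y).2 = y.2 := by
  simp [jj]

lemma LL_add {x y : (Fin N → ℝ) × ℝ} (hx : x ∈ LL N) (hy : y ∈ LL N) : x + y ∈ LL N := by
  obtain ⟨hx1, a, ha⟩ := hx
  obtain ⟨hy1, b, hb⟩ := hy
  exact ⟨latt_add hx1 hy1, a + b, by simp [ha, hb]⟩

lemma LL_smul {x : (Fin N → ℝ) × ℝ} (hx : x ∈ LL N) (k : ℤ) : (k : ℝ) • x ∈ LL N := by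
  obtain ⟨hx1, a, ha⟩ := hx
  exact ⟨latt_smul hx1 k, k * a, by simp [ha]⟩

lemma LL_shift [Nonempty ι] {v : ι → (Fin n → ℝ)} (hv : ∀ i, IsLatticePt (v i)) (i : ι)
    {y : (Fin n → ℝ) × ℝ}
    (hy : y ∈ LL n) (hyS : y ∈ Submodule.span ℝ (Set.range (hm v))) :
    ∃ (p : Fin n → ℝ) (k : ℤ), IsLatticePt p ∧ p ∈ affineSpan ℝ (convexHull ℝ (Set.range v)) ∧
      y = (p, 1) + (k : ℝ) • hm v i := by
  obtain ⟨y1, y2⟩ := y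
  obtain ⟨hy1, k, hk⟩ := hy
  simp only at hy1 hk
  subst hk
  have he : ((y1, (k:ℝ)) : (Fin n → ℝ) × ℝ) =
      (y1 + ((1 - k : ℤ) : ℝ) • v i, 1) + ((k - 1 : ℤ) : ℝ) • hm v i := by
    ext1
    · simp only [hm, Prod.fst_add, Prod.smul_fst]
      push_cast
      module
    · simp [hm]
  refine ⟨y1 + ((1 - k : ℤ) : ℝ) • v i, k - 1, latt_add hy1 (latt_smul (hv i) _), ?_, he⟩
  have := mem_smul_span v one_pos (y1 + ((1 - k : ℤ) : ℝ) • v i)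
  rw [one_smul] at this
  rw [← this]
  have h2 := Submodule.sub_mem _ hyS (Submodule.smul_mem _ ((k - 1 : ℤ) : ℝ)
    (Submodule.subset_span (s := Set.range (hm v)) ⟨i, rfl⟩))
  rw [he] at h2
  simpa using h2

lemma jj_LL [Nonempty ι] {v : ι → (Fin n → ℝ)} (hv : ∀ i, IsLatticePt (v i))
    {α : (Fin n → ℝ) →ᵃ[ℝ] (Fin N → ℝ)}
    (hα : ∀ x ∈ affineSpan ℝ (convexHull ℝ (Set.range v)), IsLatticePt x → IsLatticePt (α x))
    {y : (Fin n → ℝ) × ℝ}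
    (hy : y ∈ LL n) (hyS : y ∈ Submodule.span ℝ (Set.range (hm v))) : jj α y ∈ LL N := by
  obtain ⟨i⟩ := (inferInstance : Nonempty ι)
  obtain ⟨p, k, hp, hpa, rfl⟩ := LL_shift hv i hy hyS
  rw [map_add, map_smul, hm, jj_one, jj_one]
  refine LL_add ⟨hα p hpa hp, 1, by simp⟩ (LL_smul ⟨hα _ ?_ (hv i), 1, by simp⟩ k)
  exact subset_affineSpan ℝ _ (subset_convexHull _ _ ⟨i, rfl⟩)

lemma codeg_spec [Nonempty ι] {v : ι → (Fin n → ℝ)} (hv : ∀ i, IsLatticePt (v i)) :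
    0 < polyCodeg (convexHull ℝ (Set.range v)) ∧
    ∃ y ∈ intrinsicInterior ℝ
      ((polyCodeg (convexHull ℝ (Set.range v)) : ℝ) • convexHull ℝ (Set.range v)),
      IsLatticePt y := by
  have hne : {r : ℕ | 0 < r ∧ ¬ IsHollow ((r : ℝ) • convexHull ℝ (Set.range v))}.Nonempty := by
    refine ⟨Fintype.card ι, Fintype.card_pos, ?_⟩
    intro h
    refine h _ (relint_sum v) ?_
    intro k
    choose z hz using fun i => hv i k
    exact ⟨∑ i, z i, by simp [hz]⟩
  have := Nat.sInf_mem hne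
  refine ⟨this.1, ?_⟩
  by_contra h
  push Not at h
  exact this.2 (fun x hx hL => h x hx hL)

lemma core_s5 [Nonempty ι] [Nonempty κ] {v : ι → (Fin n → ℝ)} {w : κ → (Fin n → ℝ)}
    (hv : ∀ i, IsLatticePt (v i)) (hw : ∀ i, IsLatticePt (w i))
    {α β : (Fin n → ℝ) →ᵃ[ℝ] (Fin N → ℝ)}
    (hα : ∀ x ∈ affineSpan ℝ (convexHull ℝ (Set.range v)), IsLatticePt x → IsLatticePt (α x))
    (hβ : ∀ x ∈ affineSpan ℝ (convexHull ℝ (Set.range w)), IsLatticePt x → IsLatticePt (β x))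
    (hdim : polyDim (convexHull ℝ (Set.range v)) + polyDim (convexHull ℝ (Set.range w)) + 1 =
      polyDim (convexHull ℝ (Set.range (Sum.elim (α ∘ v) (β ∘ w)))))
    (hcod : polyCodeg (convexHull ℝ (Set.range v)) + polyCodeg (convexHull ℝ (Set.range w)) =
      polyCodeg (convexHull ℝ (Set.range (Sum.elim (α ∘ v) (β ∘ w)))))
    (hG : IsGorenstein (convexHull ℝ (Set.range (Sum.elim (α ∘ v) (β ∘ w))))) :
    ∃ (r : ℕ) (y : Fin n → ℝ), 0 < r ∧
      y ∈ intrinsicInterior ℝ ((r : ℝ) • convexHull ℝ (Set.range v)) ∧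
      Gor (hm v) (LL n) (y, (r:ℝ)) ∧
      ∀ l, FF (hm v) (y, (r:ℝ)) l → ∃ l' : (Fin N → ℝ) × ℝ →ₗ[ℝ] ℝ,
        (∀ i, l' (hm (α ∘ v) i) = l (hm v i)) ∧ (∀ k, l' (hm (β ∘ w) k) = 0) ∧
        ∀ z ∈ LL N, z ∈ Submodule.span ℝ (Set.range (hm (Sum.elim (α ∘ v) (β ∘ w)))) →
          ∃ t : ℤ, l' z = t := by
  set a : ι ⊕ κ → (Fin N → ℝ) := Sum.elim (α ∘ v) (β ∘ w) with ha
  have haL : ∀ s, IsLatticePt (a s) := by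
    rintro (i | k)
    · exact hα _ (subset_affineSpan ℝ _ (subset_convexHull _ _ ⟨i, rfl⟩)) (hv i)
    · exact hβ _ (subset_affineSpan ℝ _ (subset_convexHull _ _ ⟨k, rfl⟩)) (hw k)
  obtain ⟨rP, hrP, hRef⟩ := hG
  obtain ⟨x, hx, hxL, hGor⟩ := gor_of_reflexive haL (by omega) hrP hRef
  obtain ⟨hr, y, hy, hyL⟩ := codeg_spec hv
  obtain ⟨hr2, y2, hy2, hy2L⟩ := codeg_spec hw
  set r := polyCodeg (convexHull ℝ (Set.range v)) with hrdef
  set r2 := polyCodeg (convexHull ℝ (Set.range w)) with hr2def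
  have hr' : (0:ℝ) < r := by exact_mod_cast hr
  have hr2' : (0:ℝ) < r2 := by exact_mod_cast hr2
  have hrel := relC_of_relint hr' hy
  have hrel2 := relC_of_relint hr2' hy2
  have hyLL : ((y, (r:ℝ)) : (Fin n → ℝ) × ℝ) ∈ LL n := ⟨hyL, r, by simp⟩
  have hy2LL : ((y2, (r2:ℝ)) : (Fin n → ℝ) × ℝ) ∈ LL n := ⟨hy2L, r2, by simp⟩
  have hjl : ∀ i, jj α (hm v i) = hm a (Sum.inl i) := fun i => by simp [hm, jj_one, ha]
  have hjr : ∀ k, jj β (hm w k) = hm a (Sum.inr k) := fun i => by simp [hm, jj_one, ha]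
  set m' := jj α (y, (r:ℝ)) + jj β (y2, (r2:ℝ)) with hm'
  have hm'LL : m' ∈ LL N := LL_add (jj_LL hv hα hyLL (relC_span hrel))
    (jj_LL hw hβ hy2LL (relC_span hrel2))
  have hm'rel : RelC (hm a) m' := by
    obtain ⟨c, hc, he⟩ := hrel
    obtain ⟨c2, hc2, he2⟩ := hrel2
    refine ⟨Sum.elim c c2, ?_, ?_⟩
    · rintro (i | k)
      · exact hc i
      · exact hc2 k
    · rw [hm', he, he2, map_sum, map_sum, Fintype.sum_sum_type]
      simp [hjl, hjr]
  obtain ⟨hle, huniq⟩ := gor_unique hGor hm'rel hm'LL (LinearMap.snd ℝ _ _) (fun i => rfl)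
  have hsnd : m'.2 = (r:ℝ) + r2 := by simp [hm', jj_snd]
  simp only [LinearMap.snd_apply, hsnd] at hle huniq
  have hle2 : polyCodeg (convexHull ℝ (Set.range a)) ≤ rP :=
    Nat.sInf_le ⟨hrP, fun h => h x hx hxL⟩
  have hle3 : rP ≤ r + r2 := by exact_mod_cast hle
  have hrr : (rP : ℝ) = r + r2 := by
    have : rP = r + r2 := by omega
    rw [this]; push_cast; ring
  have hmm := huniq hrr
  -- injectivity
  set SF := Submodule.span ℝ (Set.range (hm v)) with hSF
  set SG := Submodule.span ℝ (Set.range (hm w)) with hSG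
  set J : SF × SG →ₗ[ℝ] (Fin N → ℝ) × ℝ :=
    ((jj α).comp SF.subtype).coprod ((jj β).comp SG.subtype) with hJ
  have hJa : ∀ (p : SF) (q : SG), J (p, q) = jj α p + jj β q := by intro p q; simp [hJ]
  have hinj : Function.Injective J := by
    rw [← LinearMap.ker_eq_bot]
    have hrange : Submodule.span ℝ (Set.range (hm a)) ≤ LinearMap.range J := by
      rw [Submodule.span_le]
      rintro _ ⟨i | k, rfl⟩
      · refine ⟨(⟨hm v i, Submodule.subset_span ⟨i, rfl⟩⟩, 0), ?_⟩
        rw [hJa, ← hjl]; simp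
      · refine ⟨(0, ⟨hm w k, Submodule.subset_span ⟨k, rfl⟩⟩), ?_⟩
        rw [hJa, ← hjr]; simp
    have h1 := Submodule.finrank_mono hrange
    have h2 := LinearMap.finrank_range_add_finrank_ker J
    rw [Module.finrank_prod, polyDim_conv v, polyDim_conv w] at h2
    rw [polyDim_conv a] at h1
    apply Submodule.finrank_eq_zero.mp
    omega
  obtain ⟨K, hK⟩ := LinearMap.exists_leftInverse_of_injective J (LinearMap.ker_eq_bot.mpr hinj)
  have hKJ : ∀ z, K (J z) = z := fun z => by
    have := LinearMap.congr_fun hK z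
    simpa using this
  have hKF : ∀ z (hz : z ∈ SF), K (jj α z) = (⟨z, hz⟩, 0) := by
    intro z hz
    rw [← hKJ (⟨z, hz⟩, 0), hJa]; simp
  have hKG : ∀ z (hz : z ∈ SG), K (jj β z) = (0, ⟨z, hz⟩) := by
    intro z hz
    rw [← hKJ (0, ⟨z, hz⟩), hJa]; simp
  have key : ∀ l, FF (hm v) (y, (r:ℝ)) l → ∃ l' : (Fin N → ℝ) × ℝ →ₗ[ℝ] ℝ,
        (∀ z ∈ SF, l' (jj α z) = l z) ∧ (∀ z ∈ SG, l' (jj β z) = 0) ∧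
        ∀ z ∈ LL N, z ∈ Submodule.span ℝ (Set.range (hm a)) → ∃ t : ℤ, l' z = t := by
    intro l hl
    set l' : (Fin N → ℝ) × ℝ →ₗ[ℝ] ℝ :=
      (l.comp SF.subtype).comp ((LinearMap.fst ℝ SF SG).comp K) with hl'
    have h1 : ∀ z ∈ SF, l' (jj α z) = l z := by
      intro z hz; simp [hl', hKF z hz]
    have h2 : ∀ z ∈ SG, l' (jj β z) = 0 := by
      intro z hz; simp [hl', hKG z hz]
    refine ⟨l', h1, h2, hGor.2.2 l' ⟨?_, ?_, ?_⟩⟩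
    · rintro (i | k)
      · rw [← hjl, h1 _ (Submodule.subset_span ⟨i, rfl⟩)]
        exact hl.1 i
      · rw [← hjr, h2 _ (Submodule.subset_span ⟨k, rfl⟩)]
    · rw [← hmm, hm', map_add, h1 _ (relC_span hrel), h2 _ (relC_span hrel2), hl.2.1, add_zero]
    · set T := Submodule.span ℝ (insert ((x, (rP:ℝ)) : (Fin N → ℝ) × ℝ)
        {z | ∃ j, z = hm a j ∧ l' (hm a j) = 0}) with hT
      have hTr : ∀ k, hm a (Sum.inr k) ∈ T := by
        intro k
        refine Submodule.subset_span (Set.mem_insert_of_mem _ ⟨_, rfl, ?_⟩)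
        rw [← hjr, h2 _ (Submodule.subset_span ⟨k, rfl⟩)]
      have hTG : ∀ z ∈ SG, jj β z ∈ T := by
        have : SG ≤ T.comap (jj β) := by
          rw [hSG, Submodule.span_le]
          rintro _ ⟨k, rfl⟩
          simp only [SetLike.mem_coe, Submodule.mem_comap, hjr]
          exact hTr k
        exact fun z hz => this hz
      have hTy : jj α (y, (r:ℝ)) ∈ T := by
        have h3 : m' ∈ T := by rw [hmm]; exact Submodule.subset_span (Set.mem_insert _ _)
        have h4 := Submodule.sub_mem _ h3 (hTG _ (relC_span hrel2))
        simpa [hm'] using h4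
      rintro (i | k)
      · have : Submodule.span ℝ (insert ((y, (r:ℝ)) : (Fin n → ℝ) × ℝ)
            {z | ∃ j, z = hm v j ∧ l (hm v j) = 0}) ≤ T.comap (jj α) := by
          rw [Submodule.span_le]
          rintro z (rfl | ⟨k, rfl, hk⟩)
          · exact hTy
          · simp only [SetLike.mem_coe, Submodule.mem_comap, hjl]
            refine Submodule.subset_span (Set.mem_insert_of_mem _ ⟨_, rfl, ?_⟩)
            rw [← hjl, h1 _ (Submodule.subset_span ⟨k, rfl⟩), hk]
        have h5 := this (hl.2.2 i)
        rw [Submodule.mem_comap, hjl] at h5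
        exact h5
      · exact hTr k
  refine ⟨r, y, hr, hy, ⟨hrel, hyLL, ?_⟩, ?_⟩
  · intro l hl z hz hzS
    obtain ⟨l', h1, -, h3⟩ := key l hl
    rw [← h1 z hzS]
    apply h3 _ (jj_LL hv hα hz hzS)
    have : SF ≤ (Submodule.span ℝ (Set.range (hm a))).comap (jj α) := by
      rw [hSF, Submodule.span_le]
      rintro _ ⟨k, rfl⟩
      simp only [SetLike.mem_coe, Submodule.mem_comap, hjl]
      exact Submodule.subset_span ⟨_, rfl⟩
    exact this hzS
  · intro l hl
    obtain ⟨l', h1, h2, h3⟩ := key l hl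
    refine ⟨l', fun i => ?_, fun k => ?_, h3⟩
    · have := h1 _ (Submodule.subset_span ⟨i, rfl⟩)
      rwa [hjl] at this
    · have := h2 _ (Submodule.subset_span ⟨k, rfl⟩)
      rwa [hjr] at this
end Core

open Pointwise
section Pyr
variable {N n : ℕ}

lemma latt_snoc {x : Fin n → ℝ} (hx : IsLatticePt x) (z : ℤ) :
    IsLatticePt (Fin.snoc (α := fun _ => ℝ) x (z : ℝ) : Fin (n + 1) → ℝ) := by
  intro i
  refine Fin.lastCases ?_ (fun i => ?_) i
  · exact ⟨z, by simp⟩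
  · obtain ⟨a, ha⟩ := hx i
    exact ⟨a, by simp [ha]⟩

lemma poly_family {P : Set (Fin n → ℝ)} (hP : IsLatticePolytope P) :
    ∃ (ι : Type) (_ : Fintype ι) (_ : Nonempty ι) (v : ι → (Fin n → ℝ)),
      (∀ i, IsLatticePt (v i)) ∧ P = convexHull ℝ (Set.range v) := by
  obtain ⟨V, hV, hL, rfl⟩ := hP
  refine ⟨V, inferInstance, hV.to_subtype, Subtype.val, fun i => hL i i.2, ?_⟩
  rw [Subtype.range_coe]

lemma pyr_data {F : Set (Fin n → ℝ)} (hF : IsLatticePyramid F) :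
    ∃ (ι : Type) (_ : Fintype ι) (v : Option ι → (Fin n → ℝ)),
      (∀ i, IsLatticePt (v i)) ∧ F = convexHull ℝ (Set.range v) ∧
      ∃ π : (Fin n → ℝ) × ℝ →ₗ[ℝ] ℝ, π (hm v none) = 1 ∧ (∀ i, π (hm v (some i)) = 0) ∧
        ∀ z ∈ LL n, z ∈ Submodule.span ℝ (Set.range (hm v)) → ∃ t : ℤ, π z = t := by
  rcases hF with ⟨x, hx, rfl⟩ | ⟨m, P', hP', f, g, hf, hg, hgf, hfg, hfL, hgL⟩
  · refine ⟨Empty, inferInstance, fun _ => x, fun _ => hx, ?_, LinearMap.snd ℝ _ _, ?_, ?_, ?_⟩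
    · simp
    · simp [hm]
    · rintro ⟨⟩
    · rintro z ⟨-, t, ht⟩ -
      exact ⟨t, ht⟩
  · obtain ⟨ι, _, _, w, hw, rfl⟩ := poly_family hP'
    set Q := pyramidOver (convexHull ℝ (Set.range w)) with hQ
    set b : Option ι → (Fin (m + 1) → ℝ) :=
      fun o => o.elim (Fin.snoc (α := fun _ => ℝ) 0 1) (fun i => Fin.snoc (α := fun _ => ℝ) (w i) 0) with hb
    have hbL : ∀ o, IsLatticePt (b o) := by
      rintro (_ | i)
      · have := latt_snoc (n := m) (x := 0) (fun i => ⟨0, by simp⟩) 1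
        rw [Int.cast_one] at this
        exact this
      · have := latt_snoc (hw i) 0
        rw [Int.cast_zero] at this
        exact this
    have hQb : Q = convexHull ℝ (Set.range b) := by
      rw [hQ, pyramidOver]
      let S : (Fin m → ℝ) →ₗ[ℝ] (Fin (m + 1) → ℝ) :=
        { toFun := fun x => Fin.snoc (α := fun _ => ℝ) x 0
          map_add' := by
            intro x y; ext i
            refine Fin.lastCases ?_ (fun i => ?_) i <;> simp
          map_smul' := by
            intro c x; ext i
            refine Fin.lastCases ?_ (fun i => ?_) i <;> simp }
      have h1 : (fun x : Fin m → ℝ => (Fin.snoc (α := fun _ => ℝ) x (0:ℝ) : Fin (m+1) → ℝ)) ''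
          (convexHull ℝ (Set.range w)) = convexHull ℝ (S '' Set.range w) :=
        S.image_convexHull _
      have h2 : Set.range b = S '' Set.range w ∪ {Fin.snoc (α := fun _ => ℝ) (0 : Fin m → ℝ) (1:ℝ)} := by
        ext y
        constructor
        · rintro ⟨_ | i, rfl⟩
          · right; rfl
          · left; exact ⟨w i, ⟨i, rfl⟩, rfl⟩
        · rintro (⟨_, ⟨i, rfl⟩, rfl⟩ | rfl)
          · exact ⟨some i, rfl⟩
          · exact ⟨none, rfl⟩
      rw [h2]
      exact (congrArg (fun A => convexHull ℝ (A ∪ _)) h1).trans (convexHull_convexHull_union_left _ _)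
    have hbQ : ∀ o, b o ∈ affineSpan ℝ Q := fun o => by
      apply subset_affineSpan
      rw [hQb]
      exact subset_convexHull _ _ ⟨o, rfl⟩
    have hFv : F = convexHull ℝ (Set.range (g ∘ b)) := by
      rw [← hg, hQb, AffineMap.image_convexHull, Set.range_comp]
    have hvL : ∀ o, IsLatticePt ((g ∘ b) o) := fun o => hgL _ (hbQ o) (hbL o)
    have hj : ∀ o, jj f (hm (g ∘ b) o) = (b o, 1) := fun o => by
      rw [hm, jj_one, Function.comp_apply, hfg _ (hbQ o)]
    refine ⟨ι, inferInstance, g ∘ b, hvL, hFv,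
      ((LinearMap.proj (Fin.last m)).comp (LinearMap.fst ℝ _ _)).comp (jj f), ?_, ?_, ?_⟩
    · rw [LinearMap.comp_apply, hj]
      simp [hb]
    · intro i
      rw [LinearMap.comp_apply, hj]
      simp [hb]
    · intro z hz hzS
      have := jj_LL hvL (α := f) (by rw [← hFv]; exact hfL) hz hzS
      exact this.1 (Fin.last m)

lemma pyr_build {σ : Type} [Fintype σ] {a : σ → (Fin N → ℝ)} (ha : ∀ s, IsLatticePt (a s))
    (s0 : σ) (hne : ∃ s, s ≠ s0) (l : (Fin N → ℝ) × ℝ →ₗ[ℝ] ℝ) (h1 : l (hm a s0) = 1)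
    (h0 : ∀ s, s ≠ s0 → l (hm a s) = 0)
    (hint : ∀ z ∈ LL N, z ∈ Submodule.span ℝ (Set.range (hm a)) → ∃ t : ℤ, l z = t) :
    IsLatticePyramid (convexHull ℝ (Set.range a)) := by
  classical
  right
  haveI : Nonempty σ := ⟨s0⟩
  set V : Finset (Fin N → ℝ) := (Finset.univ.filter (fun s => s ≠ s0)).image a with hV
  have hVL : ∀ v ∈ V, IsLatticePt v := by
    intro v hv
    obtain ⟨s, -, rfl⟩ := Finset.mem_image.mp hv
    exact ha s
  refine ⟨N, convexHull ℝ (V : Set _), ⟨V, ?_, hVL, rfl⟩, ?_⟩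
  · obtain ⟨s, hs⟩ := hne
    exact ⟨a s, Finset.mem_image.mpr ⟨s, by simp [hs], rfl⟩⟩
  have hπ : ∃ π : (Fin N → ℝ) →ᵃ[ℝ] ℝ, ∀ x, π x = l (x, 1) := by
    refine ⟨(l.comp (LinearMap.inl ℝ (Fin N → ℝ) ℝ)).toAffineMap +
      AffineMap.const ℝ (Fin N → ℝ) (l (0, 1)), fun x => ?_⟩
    have : l (x, 1) = l (x, 0) + l (0, 1) := by rw [← map_add]; simp
    simp [this]
  obtain ⟨π, hπ⟩ := hπ
  let f : (Fin N → ℝ) →ᵃ[ℝ] (Fin (N + 1) → ℝ) :=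
    { toFun := fun x => Fin.snoc (α := fun _ => ℝ) (x - π x • a s0) (π x)
      linear := 
        { toFun := fun x => Fin.snoc (α := fun _ => ℝ) (x - π.linear x • a s0) (π.linear x)
          map_add' := by
            intro x y; ext i
            refine Fin.lastCases ?_ (fun i => ?_) i
            · simp
            · simp; ring
          map_smul' := by
            intro c x; ext i
            refine Fin.lastCases ?_ (fun i => ?_) i
            · simp
            · simp; ring }
      map_vadd' := by
        intro p v; ext i
        have hvp : π (v + p) = π.linear v + π p := by simpa using π.map_vadd p v
        refine Fin.lastCases ?_ (fun i => ?_) i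
        · simp [hvp]
        · simp [hvp]; ring }
  let g : (Fin (N + 1) → ℝ) →ᵃ[ℝ] (Fin N → ℝ) := LinearMap.toAffineMap
    { toFun := fun y => (fun i => y (Fin.castSucc i)) + y (Fin.last N) • a s0
      map_add' := by intro x y; ext i; simp; ring
      map_smul' := by intro c x; ext i; simp; ring }
  have hf : ∀ x, f x = Fin.snoc (α := fun _ => ℝ) (x - π x • a s0) (π x) := fun x => rfl
  have hg : ∀ y, g y = (fun i => y (Fin.castSucc i)) + y (Fin.last N) • a s0 := fun y => rfl
  have hgf : ∀ x, g (f x) = x := by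
    intro x
    rw [hg, hf]
    ext i
    simp
  -- pyramid generators
  let b : σ → (Fin (N + 1) → ℝ) := fun s => f (a s)
  have hb0 : b s0 = Fin.snoc (α := fun _ => ℝ) 0 1 := by
    have : π (a s0) = 1 := by rw [hπ]; exact h1
    show f (a s0) = _
    rw [hf, this]; simp
  have hb1 : ∀ s, s ≠ s0 → b s = Fin.snoc (α := fun _ => ℝ) (a s) 0 := by
    intro s hs
    have : π (a s) = 0 := by rw [hπ]; exact h0 s hs
    show f (a s) = _
    rw [hf, this]; simp
  have hQ : pyramidOver (convexHull ℝ (V : Set (Fin N → ℝ))) = convexHull ℝ (Set.range b) := by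
    rw [pyramidOver]
    let S : (Fin N → ℝ) →ₗ[ℝ] (Fin (N + 1) → ℝ) :=
      { toFun := fun x => Fin.snoc (α := fun _ => ℝ) x 0
        map_add' := by
          intro x y; ext i
          refine Fin.lastCases ?_ (fun i => ?_) i <;> simp
        map_smul' := by
          intro c x; ext i
          refine Fin.lastCases ?_ (fun i => ?_) i <;> simp }
    have e1 : (fun x : Fin N → ℝ => (Fin.snoc (α := fun _ => ℝ) x (0:ℝ) : Fin (N+1) → ℝ)) ''
        (convexHull ℝ (V : Set (Fin N → ℝ))) = convexHull ℝ (S '' (V : Set (Fin N → ℝ))) :=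
      S.image_convexHull _
    have e2 : Set.range b = S '' (V : Set (Fin N → ℝ)) ∪
        {Fin.snoc (α := fun _ => ℝ) (0 : Fin N → ℝ) (1:ℝ)} := by
      ext y
      constructor
      · rintro ⟨s, rfl⟩
        by_cases hs : s = s0
        · right; rw [hs, hb0]; rfl
        · left
          rw [hb1 s hs]
          exact ⟨a s, by rw [hV]; simp only [Finset.coe_image]; exact ⟨s, by simp [hs], rfl⟩, rfl⟩
      · rintro (⟨v, hv, rfl⟩ | rfl)
        · obtain ⟨s, hs, rfl⟩ := Finset.mem_image.mp (Finset.mem_coe.mp hv)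
          exact ⟨s, hb1 s (by simpa using hs)⟩
        · exact ⟨s0, hb0⟩
    rw [e2]
    exact (congrArg (fun A => convexHull ℝ (A ∪ _)) e1).trans (convexHull_convexHull_union_left _ _)
  have hbr : Set.range b = f '' Set.range a := by
    rw [← Set.range_comp]; rfl
  have hfP : f '' (convexHull ℝ (Set.range a)) =
      pyramidOver (convexHull ℝ (V : Set (Fin N → ℝ))) := by
    rw [hQ, AffineMap.image_convexHull, hbr]
  have hspan : ∀ y ∈ affineSpan ℝ (pyramidOver (convexHull ℝ (V : Set (Fin N → ℝ)))),
      f (g y) = y := by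
    intro y hy
    rw [← hfP, ← AffineSubspace.map_span] at hy
    obtain ⟨x, -, rfl⟩ := hy
    rw [hgf]
  refine ⟨f, g, hfP, ?_, fun x _ => hgf x, hspan, ?_, ?_⟩
  · rw [← hfP, Set.image_image]
    simp [hgf]
  · intro x hx hxL
    have hmem := mem_smul_span a one_pos x
    rw [one_smul] at hmem
    obtain ⟨t, ht⟩ := hint (x, 1) ⟨hxL, 1, by simp⟩ (hmem.mpr hx)
    rw [hf, hπ, ht]
    apply latt_snoc
    have := latt_add hxL (latt_smul (ha s0) (-t))
    convert this using 1
    push_cast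
    module
  · intro y hy hyL
    obtain ⟨t, ht⟩ := hyL (Fin.last N)
    rw [hg, ht]
    exact latt_add (fun i => hyL _) (latt_smul (ha s0) t)

lemma conv_union {ι κ : Type} (v : ι → (Fin n → ℝ)) (w : κ → (Fin n → ℝ))
    (α β : (Fin n → ℝ) →ᵃ[ℝ] (Fin N → ℝ)) :
    convexHull ℝ (α '' convexHull ℝ (Set.range v) ∪ β '' convexHull ℝ (Set.range w)) =
      convexHull ℝ (Set.range (Sum.elim (α ∘ v) (β ∘ w))) := by
  rw [AffineMap.image_convexHull, AffineMap.image_convexHull, convexHull_convexHull_union_left,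
    convexHull_convexHull_union_right, Set.Sum.elim_range, Set.range_comp, Set.range_comp]

lemma step {P : Set (Fin N → ℝ)} {F G : Set (Fin n → ℝ)} (hF : IsLatticePolytope F)
    (hG : IsLatticePolytope G) {α β : (Fin n → ℝ) →ᵃ[ℝ] (Fin N → ℝ)}
    (hα : ∀ x ∈ affineSpan ℝ F, IsLatticePt x → IsLatticePt (α x))
    (hβ : ∀ x ∈ affineSpan ℝ G, IsLatticePt x → IsLatticePt (β x))
    (hP : P = convexHull ℝ (α '' F ∪ β '' G))
    (hdim : polyDim F + polyDim G + 1 = polyDim P)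
    (hcod : polyCodeg F + polyCodeg G = polyCodeg P) (hGor : IsGorenstein P)
    (ih : IsGorenstein F → IsLatticePyramid F) : IsLatticePyramid P := by
  obtain ⟨κ, _, _, w, hw, rfl⟩ := poly_family hG
  have hFG : IsGorenstein F := by
    obtain ⟨ι, _, _, v, hv, rfl⟩ := poly_family hF
    rw [conv_union] at hP
    subst hP
    obtain ⟨r, y, hr, hy, hg, -⟩ := core_s5 hv hw hα hβ hdim hcod hGor
    exact isGor_of_gor hr hy hg
  obtain ⟨ι, _, v, hv, rfl, π, hπ1, hπ0, hπi⟩ := pyr_data (ih hFG)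
  rw [conv_union] at hP
  subst hP
  obtain ⟨r, y, hr, hy, hg, hext⟩ := core_s5 hv hw hα hβ hdim hcod hGor
  have hπn : ∀ i, 0 ≤ π (hm v i) := by
    rintro (_ | i)
    · rw [hπ1]; norm_num
    · rw [hπ0]
  have hpos := relC_pos hg.1 hπn ⟨none, by rw [hπ1]; norm_num⟩
  obtain ⟨z, hz⟩ := hπi _ hg.2.1 (relC_span hg.1)
  set l := (π (y, (r:ℝ)))⁻¹ • π with hl
  have hl0 : ∀ i, l (hm v (some i)) = 0 := fun i => by simp [hl, hπ0]
  have hFF : FF (hm v) (y, (r:ℝ)) l := by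
    refine ⟨fun i => ?_, ?_, ?_⟩
    · simp only [hl, LinearMap.smul_apply, smul_eq_mul]
      exact mul_nonneg (inv_nonneg.mpr hpos.le) (hπn i)
    · simp only [hl, LinearMap.smul_apply, smul_eq_mul]
      exact inv_mul_cancel₀ hpos.ne'
    · set T := Submodule.span ℝ (insert ((y, (r:ℝ)) : (Fin n → ℝ) × ℝ)
        {z | ∃ j, z = hm v j ∧ l (hm v j) = 0}) with hT
      have hs : ∀ i, hm v (some i) ∈ T := fun i =>
        Submodule.subset_span (Set.mem_insert_of_mem _ ⟨_, rfl, hl0 i⟩)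
      rintro (_ | i)
      · obtain ⟨c, hc, he⟩ := hg.1
        rw [Fintype.sum_option] at he
        have h1 : hm v none = (c none)⁻¹ • ((y, (r:ℝ)) - ∑ i, c (some i) • hm v (some i)) := by
          rw [he, add_sub_cancel_right, smul_smul, inv_mul_cancel₀ (hc none).ne', one_smul]
        rw [h1]
        exact Submodule.smul_mem _ _ (Submodule.sub_mem _
          (Submodule.subset_span (Set.mem_insert _ _))
          (Submodule.sum_mem _ fun i _ => Submodule.smul_mem _ _ (hs i)))
      · exact hs i
  obtain ⟨t, ht⟩ := hg.2.2 l hFF (hm v none) ⟨hv none, 1, by simp [hm]⟩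
    (Submodule.subset_span ⟨none, rfl⟩)
  have hl1 : l (hm v none) = 1 := by
    simp only [hl, LinearMap.smul_apply, smul_eq_mul, hπ1, mul_one] at ht ⊢
    have h2 : z * t = 1 := by
      have : (z:ℝ) * t = 1 := by rw [← hz, ← ht, mul_inv_cancel₀ hpos.ne']
      exact_mod_cast this
    have hz0 : 0 ≤ z := by
      rw [hz] at hpos
      exact_mod_cast hpos.le
    have := Int.eq_one_of_mul_eq_one_right hz0 h2
    rw [hz, this]; simp
  obtain ⟨l', h1, h2, h3⟩ := hext l hFF
  refine pyr_build ?_ (Sum.inl none) ⟨Sum.inr (Classical.arbitrary κ), by simp⟩ l' ?_ ?_ h3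
  · rintro (i | k)
    · exact hα _ (subset_affineSpan ℝ _ (subset_convexHull _ _ ⟨i, rfl⟩)) (hv i)
    · exact hβ _ (subset_affineSpan ℝ _ (subset_convexHull _ _ ⟨k, rfl⟩)) (hw k)
  · exact (h1 none).trans hl1
  · rintro ((_ | i) | k) hs
    · exact absurd rfl hs
    · exact (h1 _).trans (hl0 i)
    · exact h2 k

def app2 (n : ℕ) (c : Fin 2 → ℝ) : (Fin n → ℝ) →ᵃ[ℝ] (Fin (n + 2) → ℝ) :=
  { toFun := fun x => Fin.append x c
    linear :=
      { toFun := fun x => Fin.append x 0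
        map_add' := by
          intro x y; ext i
          refine Fin.addCases (fun i => ?_) (fun i => ?_) i <;> simp
        map_smul' := by
          intro k x; ext i
          refine Fin.addCases (fun i => ?_) (fun i => ?_) i <;> simp }
    map_vadd' := by
      intro p v; ext i
      refine Fin.addCases (fun i => ?_) (fun i => ?_) i <;> simp }

lemma latt_app2 {c : Fin 2 → ℝ} (hc : ∀ i, ∃ z : ℤ, c i = z) {x : Fin n → ℝ}
    (hx : IsLatticePt x) : IsLatticePt (app2 n c x) := by
  intro i
  refine Fin.addCases (fun i => ?_) (fun i => ?_) i
  · simpa [app2] using hx i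
  · simpa [app2] using hc i

lemma main_aux
    (H : ∀ (N : ℕ) (P : Set (Fin N → ℝ)), IsLatticePolytope P → IsGorenstein P →
      2 * polyDeg P < polyDim P → IsReducible P) (D : ℕ) :
    ∀ (N : ℕ) (P : Set (Fin N → ℝ)), polyDim P = D → IsLatticePolytope P → IsGorenstein P →
      3 * polyDeg P ≤ polyDim P → IsLatticePyramid P := by
  induction D using Nat.strong_induction_on with
  | _ D IH =>
  intro N P hD hP hG hdeg
  by_cases h0 : polyDim P = 0
  · left
    obtain ⟨V, ⟨x, hx⟩, hL, hPV⟩ := hP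
    refine ⟨x, hL x hx, ?_⟩
    have hxP : x ∈ P := by rw [hPV]; exact subset_convexHull _ _ hx
    rw [polyDim, direction_affineSpan] at h0
    have hbot := Submodule.finrank_eq_zero.mp h0
    ext y
    constructor
    · intro hy
      have := vsub_mem_vectorSpan ℝ hy hxP
      rw [hbot, Submodule.mem_bot, vsub_eq_sub, sub_eq_zero] at this
      exact this
    · rintro rfl
      exact hxP
  rcases H N P hP hG (by omega) with hpt | ⟨n, F, G, hF, hGl, ⟨⟨f, g, hf, hg, hgf, hfg, hfL, hgL⟩, hdim⟩, hcod⟩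
  · exact Or.inl hpt
  have hα : ∀ x ∈ affineSpan ℝ F, IsLatticePt x → IsLatticePt ((g.comp (app2 n ![1, 0])) x) := by
    intro x hx hxL
    apply hgL
    · have h1 : app2 n ![1, 0] x ∈ (affineSpan ℝ F).map (app2 n ![1, 0]) := ⟨x, hx, rfl⟩
      rw [AffineSubspace.map_span] at h1
      exact affineSpan_mono ℝ (Set.subset_union_left.trans (subset_convexHull ℝ _)) h1
    · exact latt_app2 (fun i => by fin_cases i; exacts [⟨1, by simp⟩, ⟨0, by simp⟩]) hxL
  have hβ : ∀ x ∈ affineSpan ℝ G, IsLatticePt x → IsLatticePt ((g.comp (app2 n ![0, 1])) x) := by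
    intro x hx hxL
    apply hgL
    · have h1 : app2 n ![0, 1] x ∈ (affineSpan ℝ G).map (app2 n ![0, 1]) := ⟨x, hx, rfl⟩
      rw [AffineSubspace.map_span] at h1
      exact affineSpan_mono ℝ (Set.subset_union_right.trans (subset_convexHull ℝ _)) h1
    · exact latt_app2 (fun i => by fin_cases i; exacts [⟨0, by simp⟩, ⟨1, by simp⟩]) hxL
  have hPe : P = convexHull ℝ ((g.comp (app2 n ![1, 0])) '' F ∪ (g.comp (app2 n ![0, 1])) '' G) := by
    rw [← hg, cayleyTwo, AffineMap.image_convexHull, Set.image_union, Set.image_image,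
      Set.image_image]
    rfl
  have hcase : 3 * polyDeg F ≤ polyDim F ∨ 3 * polyDeg G ≤ polyDim G := by
    unfold polyDeg at hdeg ⊢
    omega
  rcases hcase with h | h
  · exact step hF hGl hα hβ hPe hdim hcod hG
      (fun hFG => IH _ (by omega) n F rfl hF hFG h)
  · refine step hGl hF hβ hα (by rw [Set.union_comm]; exact hPe) (by omega) (by omega) hG
      (fun hFG => IH _ (by omega) n G rfl hGl hFG h)
end Pyr

/-- If every Gorenstein polytope of dimension `d` and degree `s` with `d > 2s` is
reducible, then every Gorenstein polytope of dimension `d` and degree `s` with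
`d ≥ 3s` is a lattice pyramid. -/
theorem stmt5
    (H : ∀ (N : ℕ) (P : Set (Fin N → ℝ)), IsLatticePolytope P → IsGorenstein P →
      2 * polyDeg P < polyDim P → IsReducible P) :
    ∀ (N : ℕ) (P : Set (Fin N → ℝ)), IsLatticePolytope P → IsGorenstein P →
      3 * polyDeg P ≤ polyDim P → IsLatticePyramid P := by
  intro N P hP hG hd
  exact main_aux H _ N P rfl hP hG hd
end
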